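/- arXiv:1503.06390 — 8 statements merged into one kernel-verified Lean document; each statement's English description precedes it below -/
import Mathlib

section
/- Let A be a unital C*-algebra, B ⊆ A a unital C*-subalgebra, X a selfadjoint element of A, η : A → B a continuous positive linear map, and q ∈ B strictly positive. Then for every selfadjoint u ∈ B the element (X−u)v⁻¹(X−u)+v is invertible for every strictly positive v ∈ B (since it is ≥ v), and there exists exactly one strictly positive v ∈ B satisfying the fixed-point equation v = q + η(((X−u)v⁻¹(X−u)+v)⁻¹); moreover any such v satisfies v ≥ q. -/
noncomputable section

open Filter Topology
open scoped ComplexOrder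

/-- The real part `(b + b*)/2` of an element of a complex star algebra. -/
def reP {A : Type*} [NonUnitalRing A] [StarRing A] [Module ℂ A] (b : A) : A :=
  (2 : ℂ)⁻¹ • (b + star b)

/-- The imaginary part `(b - b*)/(2i)` of an element of a complex star algebra. -/
def imP {A : Type*} [NonUnitalRing A] [StarRing A] [Module ℂ A] (b : A) : A :=
  (2 * Complex.I)⁻¹ • (b - star b)

/-- An element of a C*-algebra is strictly positive if it is selfadjoint, positive
(with respect to the canonical order coming from the star-ordered ring structure)
and invertible. -/
def SPos {A : Type*} [Ring A] [StarRing A] [PartialOrder A] (v : A) : Prop :=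
  IsSelfAdjoint v ∧ 0 ≤ v ∧ IsUnit v

section Helpers

variable {A B : Type*} [CStarAlgebra A] [PartialOrder A] [StarOrderedRing A]
    [CStarAlgebra B] [PartialOrder B] [StarOrderedRing B]

lemma fp_tsto (C : ℝ) (hC : 0 ≤ C) : Tendsto (fun n : ℕ => (C / (1 + C)) ^ n * C) atTop (𝓝 0) := by
  have h := tendsto_pow_atTop_nhds_zero_of_lt_one (r := C / (1 + C)) (by positivity)
    (by rw [div_lt_one (by positivity)]; linarith)
  simpa using h.mul_const C

lemma fp_step (q h k : B) (C s : ℝ) (hC : 0 ≤ C) (hs : 0 ≤ s) (hkC : k ≤ C • q)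
    (hhk : h ≤ (1 + s) • k) : q + h ≤ (1 + C / (1 + C) * s) • (q + k) := by
  have h1 : (s / (1 + C)) • k ≤ (s / (1 + C)) • (C • q) :=
    smul_le_smul_of_nonneg_left hkC (by positivity)
  have e : (1 + C / (1 + C) * s) • (q + k) - (q + (1 + s) • k)
      = (s / (1 + C)) • (C • q) - (s / (1 + C)) • k := by
    match_scalars <;> field_simp <;> ring
  have h2 : 0 ≤ (1 + C / (1 + C) * s) • (q + k) - (q + (1 + s) • k) := by
    rw [e]; exact sub_nonneg.2 h1
  exact (add_le_add_right hhk q).trans (sub_nonneg.1 h2)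

lemma fp_norm (q d : B) (K : ℝ) (hK : 0 ≤ K) (h1 : d ≤ K • q) (h2 : -d ≤ K • q) :
    ‖d‖ ≤ 3 * ‖q‖ * K := by
  have h3 : 0 ≤ d + K • q := by
    have := sub_nonneg.2 h2; rwa [sub_neg_eq_add, add_comm] at this
  have h4 : d + K • q ≤ K • q + K • q := by gcongr
  have h5 := CStarAlgebra.norm_le_norm_of_nonneg_of_le h3 h4
  have h6 : ‖K • q‖ = K * ‖q‖ := by rw [norm_smul, Real.norm_of_nonneg hK]
  have h7 := norm_add_le (K • q) (K • q)
  have h8 := norm_sub_le (d + K • q) (K • q)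
  rw [add_sub_cancel_right] at h8
  linarith

lemma fp_abstract (q : B) (hq0 : 0 ≤ q) (C : ℝ) (hC : 0 ≤ C) (H : B → B)
    (h0 : ∀ v, q ≤ v → 0 ≤ H v) (h1 : ∀ v, q ≤ v → H v ≤ C • q)
    (hl : ∀ v w, q ≤ v → q ≤ w → ∀ s : ℝ, 0 ≤ s → v ≤ (1 + s) • w → w ≤ (1 + s) • v →
      H v ≤ (1 + s) • H w)
    (hc : ∀ v, q ≤ v → ContinuousAt H v) :
    ∃! v, q ≤ v ∧ v = q + H v := by
  have hκ : 0 ≤ C / (1 + C) := by positivity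
  have hup : ∀ v, q ≤ v → q + H v ≤ (1 + C) • q := fun v hv => by
    rw [add_smul, one_smul]; gcongr; exact h1 v hv
  have hlow : ∀ v, q ≤ v → q ≤ q + H v := fun v hv => le_add_of_nonneg_right (h0 v hv)
  have hstep : ∀ v w, q ≤ v → q ≤ w → ∀ s : ℝ, 0 ≤ s → v ≤ (1 + s) • w → w ≤ (1 + s) • v →
      q + H v ≤ (1 + C / (1 + C) * s) • (q + H w) := fun v w hv hw s hs a b =>
    fp_step q _ _ C s hC hs (h1 w hw) (hl v w hv hw s hs a b)
  -- existence
  let V : ℕ → B := fun n => (fun v => q + H v)^[n] q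
  have hV0 : V 0 = q := rfl
  have hVs : ∀ n, V (n + 1) = q + H (V n) := fun n => Function.iterate_succ_apply' _ _ _
  have hVq : ∀ n, q ≤ V n := by
    intro n
    induction n with
    | zero => exact le_rfl
    | succ n ih => rw [hVs]; exact hlow _ ih
  have hVu : ∀ n, V n ≤ (1 + C) • q := by
    intro n
    cases n with
    | zero =>
      rw [hV0, add_smul, one_smul]
      exact le_add_of_nonneg_right (smul_nonneg hC hq0)
    | succ n => rw [hVs]; exact hup _ (hVq n)
  have hT : ∀ n, V n ≤ (1 + (C / (1 + C)) ^ n * C) • V (n + 1) ∧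
      V (n + 1) ≤ (1 + (C / (1 + C)) ^ n * C) • V n := by
    intro n
    induction n with
    | zero =>
      constructor
      · rw [hV0, pow_zero, one_mul]
        refine (hVq 1).trans ?_
        rw [add_smul, one_smul]
        exact le_add_of_nonneg_right (smul_nonneg hC (hq0.trans (hVq 1)))
      · rw [hV0, pow_zero, one_mul]; exact hVu 1
    | succ n ih =>
      have hs : 0 ≤ (C / (1 + C)) ^ n * C := by positivity
      rw [pow_succ', mul_assoc, hVs (n + 1)]
      have a := hstep _ _ (hVq n) (hVq (n + 1)) _ hs ih.1 ih.2
      have b := hstep _ _ (hVq (n + 1)) (hVq n) _ hs ih.2 ih.1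
      rw [← hVs n] at a b
      exact ⟨a, b⟩
  have hdist : ∀ n, dist (V n) (V (n + 1)) ≤ (3 * ‖q‖ * (C * (1 + C))) * (C / (1 + C)) ^ n := by
    intro n
    have hs : 0 ≤ (C / (1 + C)) ^ n * C := by positivity
    have key : ∀ a b : B, b ≤ (1 + C) • q → a ≤ (1 + (C / (1 + C)) ^ n * C) • b →
        a - b ≤ ((C / (1 + C)) ^ n * C * (1 + C)) • q := by
      intro a b hb hab
      rw [add_smul, one_smul] at hab
      rw [sub_le_iff_le_add', mul_smul]
      exact hab.trans (by gcongr)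
    rw [dist_eq_norm]
    refine (fp_norm q _ ((C / (1 + C)) ^ n * C * (1 + C)) (by positivity)
      (key _ _ (hVu _) (hT n).1) ?_).trans (le_of_eq (by ring))
    rw [neg_sub]
    exact key _ _ (hVu _) (hT n).2
  have hcau := cauchySeq_of_le_geometric _ _
    (by rw [div_lt_one (by positivity)]; linarith) hdist
  obtain ⟨v, hv⟩ := cauchySeq_tendsto_of_complete hcau
  have hqv : q ≤ v := by
    have hcl : IsClosed {a : B | 0 ≤ a} := CStarAlgebra.isClosed_nonneg
    have := hcl.mem_of_tendsto (hv.sub_const q)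
      (Eventually.of_forall fun n => sub_nonneg.2 (hVq n))
    exact sub_nonneg.1 this
  have hfix : v = q + H v := by
    have e1 : Tendsto (fun n => V (n + 1)) atTop (𝓝 v) := (tendsto_add_atTop_iff_nat 1).2 hv
    have e2 : Tendsto (fun n => V (n + 1)) atTop (𝓝 (q + H v)) := by
      simp_rw [hVs]
      exact ((hc v hqv).tendsto.comp hv).const_add q
    exact tendsto_nhds_unique e1 e2
  -- uniqueness
  have huniq : ∀ a b : B, q ≤ a → a = q + H a → q ≤ b → b = q + H b → a ≤ b := by
    intro a b ha ha' hb hb'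
    have key : ∀ n : ℕ, a ≤ (1 + (C / (1 + C)) ^ n * C) • b ∧
        b ≤ (1 + (C / (1 + C)) ^ n * C) • a := by
      intro n
      induction n with
      | zero =>
        rw [pow_zero, one_mul]
        have h1C : 0 ≤ 1 + C := by positivity
        constructor
        · refine le_trans ?_ (smul_le_smul_of_nonneg_left hb h1C)
          rw [ha']; exact hup _ ha
        · refine le_trans ?_ (smul_le_smul_of_nonneg_left ha h1C)
          rw [hb']; exact hup _ hb
      | succ n ih =>
        have hs : 0 ≤ (C / (1 + C)) ^ n * C := by positivity
        rw [pow_succ', mul_assoc]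
        have x := hstep _ _ ha hb _ hs ih.1 ih.2
        have y := hstep _ _ hb ha _ hs ih.2 ih.1
        rw [← ha', ← hb'] at x y
        exact ⟨x, y⟩
    have hcl : IsClosed {a : B | 0 ≤ a} := CStarAlgebra.isClosed_nonneg
    have t : Tendsto (fun n : ℕ => (1 + (C / (1 + C)) ^ n * C) • b - a) atTop
        (𝓝 ((1 + (0 : ℝ)) • b - a)) :=
      (((fp_tsto C hC).const_add 1).smul_const b).sub_const a
    have := hcl.mem_of_tendsto t (Eventually.of_forall fun n => sub_nonneg.2 (key n).1)
    simpa using this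
  exact ⟨v, ⟨hqv, hfix⟩, fun w hw => le_antisymm (huniq _ _ hw.1 hw.2 hqv hfix)
    (huniq _ _ hqv hfix hw.1 hw.2)⟩

lemma fp_exists_C (q h : B) (hq : IsStrictlyPositive q) (hh : IsSelfAdjoint h) :
    ∃ C : ℝ, 0 ≤ C ∧ h ≤ C • q := by
  cases subsingleton_or_nontrivial B
  · exact ⟨0, le_rfl, le_of_eq (Subsingleton.elim _ _)⟩
  obtain ⟨r, hr, hrq⟩ : ∃ r > 0, (algebraMap ℝ B) r ≤ q :=
    (CFC.exists_pos_algebraMap_le_iff hq.isSelfAdjoint).2 fun x hx ↦ hq.spectrum_pos hx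
  refine ⟨‖h‖ / r, by positivity, hh.le_algebraMap_norm_self.trans ?_⟩
  refine le_trans (le_of_eq ?_) (smul_le_smul_of_nonneg_left hrq (by positivity : 0 ≤ ‖h‖ / r))
  rw [Algebra.algebraMap_eq_smul_one, Algebra.algebraMap_eq_smul_one, smul_smul]
  field_simp

lemma fp_inverse_smul (a : A) (c : ℝ) (hc : 0 < c) (ha : IsUnit a) :
    Ring.inverse (c • a) = c⁻¹ • Ring.inverse a := by
  have h1 : (c⁻¹ • Ring.inverse a) * (c • a) = 1 := by
    rw [smul_mul_smul_comm, Ring.inverse_mul_cancel _ ha, inv_mul_cancel₀ hc.ne', one_smul]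
  have h2 : (c • a) * (c⁻¹ • Ring.inverse a) = 1 := by
    rw [smul_mul_smul_comm, Ring.mul_inverse_cancel _ ha, mul_inv_cancel₀ hc.ne', one_smul]
  exact Ring.inverse_unit (⟨c • a, c⁻¹ • Ring.inverse a, h2, h1⟩ : Aˣ)

lemma fp_inv_nonneg (a : A) (ha : IsStrictlyPositive a) : 0 ≤ Ring.inverse a := by
  lift a to Aˣ using ha.isUnit
  rw [Ring.inverse_unit]
  exact CFC.inv_nonneg_of_nonneg a ha.nonneg

lemma fp_le (Y : A) (hY : IsSelfAdjoint Y) (v : A) (hv : IsStrictlyPositive v) :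
    v ≤ Y * Ring.inverse v * Y + v :=
  le_add_of_nonneg_left (hY.conjugate_nonneg (fp_inv_nonneg v hv))

/-- If `v ≤ c w` with `c > 0` then `w⁻¹ ≤ c v⁻¹`. -/
lemma fp_inv_le (v w : A) (hv : IsStrictlyPositive v) (hw : IsStrictlyPositive w) (c : ℝ)
    (hc : 0 < c) (h : v ≤ c • w) : Ring.inverse w ≤ c • Ring.inverse v := by
  have := CStarAlgebra.ringInverse_le_ringInverse h hv
  rw [fp_inverse_smul w c hc hw.isUnit] at this
  have h2 := smul_le_smul_of_nonneg_left this hc.le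
  rwa [smul_smul, mul_inv_cancel₀ hc.ne', one_smul] at h2

lemma fp_G (Y : A) (hY : IsSelfAdjoint Y) (v w : A) (hv : IsStrictlyPositive v)
    (hw : IsStrictlyPositive w) (c : ℝ) (hc : 0 < c) (h : v ≤ c • w) (h' : w ≤ c • v) :
    Ring.inverse (Y * Ring.inverse v * Y + v) ≤
      c • Ring.inverse (Y * Ring.inverse w * Y + w) := by
  refine fp_inv_le _ _ (hw.of_le (fp_le Y hY w hw)) (hv.of_le (fp_le Y hY v hv)) c hc ?_
  rw [smul_add]
  refine add_le_add ?_ h'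
  have := hY.conjugate_le_conjugate (fp_inv_le _ _ hv hw c hc h)
  rwa [mul_smul_comm, smul_mul_assoc] at this

lemma fp_contAt (v : A) (hv : IsUnit v) : ContinuousAt Ring.inverse v := by
  obtain ⟨x, rfl⟩ := hv
  exact NormedRing.inverse_continuousAt x

end Helpers

/-- existence-and-uniqueness part of Proposition 3.1: for a unital
C*-subalgebra `B ⊆ A` (encoded by an injective unital *-homomorphism `ι`), a selfadjoint
`X ∈ A`, a continuous positive linear map `η : A → B` and a strictly positive `q ∈ B`,
for every selfadjoint `u ∈ B` the element `(X−u)v⁻¹(X−u)+v` dominates `v` and is invertible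
for every strictly positive `v`, there is exactly one strictly positive solution `v` of
`v = q + η(((X−u)v⁻¹(X−u)+v)⁻¹)`, and any such solution satisfies `v ≥ q`. -/
theorem fixed_point_existence_uniqueness
    {A B : Type*} [CStarAlgebra A] [PartialOrder A] [StarOrderedRing A]
    [CStarAlgebra B] [PartialOrder B] [StarOrderedRing B]
    (ι : B →⋆ₐ[ℂ] A) (hι : Function.Injective ι)
    (X : A) (hX : IsSelfAdjoint X)
    (η : A →L[ℂ] B) (hη : ∀ a : A, 0 ≤ a → 0 ≤ η a)
    (q : B) (hq : SPos q) (u : B) (hu : IsSelfAdjoint u) :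
    (∀ v : B, SPos v →
      ι v ≤ (X - ι u) * Ring.inverse (ι v) * (X - ι u) + ι v ∧
      IsUnit ((X - ι u) * Ring.inverse (ι v) * (X - ι u) + ι v)) ∧
    (∃! v : B, SPos v ∧
      v = q + η (Ring.inverse ((X - ι u) * Ring.inverse (ι v) * (X - ι u) + ι v))) ∧
    (∀ v : B, SPos v →
      v = q + η (Ring.inverse ((X - ι u) * Ring.inverse (ι v) * (X - ι u) + ι v)) →
      q ≤ v) := by
  have hqs : IsStrictlyPositive q := ⟨hq.2.1, hq.2.2⟩
  have hmono : ∀ a b : B, a ≤ b → ι a ≤ ι b := fun a b h => OrderHomClass.mono ι h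
  have hιs : ∀ v : B, IsStrictlyPositive v → IsStrictlyPositive (ι v) := fun v hv =>
    ⟨by simpa using hmono 0 v hv.nonneg, hv.isUnit.map ι⟩
  have hιc : Continuous ι := (NonUnitalStarAlgHom.isometry ι hι).continuous
  have hY : IsSelfAdjoint (X - ι u) := hX.sub (hu.map ι)
  set Y := X - ι u with hYdef
  have hηm : ∀ a b : A, a ≤ b → η a ≤ η b := fun a b h => by
    have := hη _ (sub_nonneg.2 h)
    rw [map_sub] at this
    exact sub_nonneg.1 this
  have hηs : ∀ (c : ℝ) (a : A), η (c • a) = c • η a := fun c a =>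
    map_smul (η.restrictScalars ℝ) c a
  have hDs : ∀ v : B, IsStrictlyPositive v →
      IsStrictlyPositive (Y * Ring.inverse (ι v) * Y + ι v) := fun v hv =>
    (hιs v hv).of_le (fp_le Y hY _ (hιs v hv))
  have hnn : ∀ v : B, IsStrictlyPositive v →
      0 ≤ η (Ring.inverse (Y * Ring.inverse (ι v) * Y + ι v)) := fun v hv =>
    hη _ (fp_inv_nonneg _ (hDs v hv))
  have hge : ∀ v : B, SPos v →
      v = q + η (Ring.inverse (Y * Ring.inverse (ι v) * Y + ι v)) → q ≤ v := by
    intro v hv h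
    rw [h]
    exact le_add_of_nonneg_right (hnn v ⟨hv.2.1, hv.2.2⟩)
  refine ⟨fun v hv => ?_, ?_, hge⟩
  · have hv' : IsStrictlyPositive v := ⟨hv.2.1, hv.2.2⟩
    exact ⟨fp_le Y hY _ (hιs v hv'), (hDs v hv').isUnit⟩
  obtain ⟨C, hC, hCq⟩ := fp_exists_C q (η (Ring.inverse (ι q))) hqs
    (hη _ (fp_inv_nonneg _ (hιs q hqs))).isSelfAdjoint
  obtain ⟨v, ⟨hqv, hv⟩, hu⟩ := fp_abstract q hqs.nonneg C hC
    (fun v => η (Ring.inverse (Y * Ring.inverse (ι v) * Y + ι v)))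
    (fun v hv => hnn v (hqs.of_le hv))
    (fun v hv => (hηm _ _ (CStarAlgebra.ringInverse_le_ringInverse
      ((hmono _ _ hv).trans (fp_le Y hY _ (hιs v (hqs.of_le hv)))) (hιs q hqs))).trans hCq)
    (fun v w hv hw s hs h h' => by
      have hs' : 0 < 1 + s := by positivity
      have hsm : ∀ a b : B, a ≤ (1 + s) • b → ι a ≤ (1 + s) • ι b := fun a b hab => by
        have e : ι ((1 + s) • b) = (1 + s) • ι b :=
          map_smul (ι.restrictScalars ℝ) (1 + s) b
        rw [← e]; exact hmono _ _ hab
      rw [← hηs]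
      exact hηm _ _ (fp_G Y hY _ _ (hιs v (hqs.of_le hv)) (hιs w (hqs.of_le hw)) _ hs'
        (hsm _ _ h) (hsm _ _ h')))
    (fun v hv => by
      have hvs := hqs.of_le hv
      have c1 : ContinuousAt (fun v => Ring.inverse (ι v)) v :=
        ContinuousAt.comp (f := ι) (g := Ring.inverse) (fp_contAt _ (hιs v hvs).isUnit)
          hιc.continuousAt
      have c2 : ContinuousAt (fun v => Y * Ring.inverse (ι v) * Y + ι v) v :=
        ((continuousAt_const.mul c1).mul continuousAt_const).add hιc.continuousAt
      exact η.continuous.continuousAt.comp (ContinuousAt.comp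
        (f := fun v => Y * Ring.inverse (ι v) * Y + ι v) (g := Ring.inverse)
        (fp_contAt _ (hDs v hvs).isUnit) c2))
  have hvs := hqs.of_le hqv
  exact ⟨v, ⟨⟨hvs.isSelfAdjoint, hvs.nonneg, hvs.isUnit⟩, hv⟩,
    fun w hw => hu w ⟨hge w hw.1 hw.2, hw.2⟩⟩
end
end

section
/- Let A be a unital C*-algebra, B ⊆ A a unital C*-subalgebra, X a selfadjoint element of A, η : A → B a continuous positive linear map, and q ∈ B strictly positive. For each selfadjoint u ∈ B let v_q(u) denote the unique strictly positive solution of v = q + η(((X−u)v⁻¹(X−u)+v)⁻¹). Then the map u ↦ v_q(u) is norm-continuous on the set of selfadjoint elements of B and uniformly bounded: ‖v_q(u)‖ ≤ ‖q‖ + ‖η‖·‖q⁻¹‖ for every selfadjoint u ∈ B. -/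
noncomputable section

open Filter Topology
open scoped ComplexOrder

section aux

variable {A : Type*} [CStarAlgebra A] [PartialOrder A] [StarOrderedRing A]

lemma aux_inv_smul {a : A} (ha : IsUnit a) {t : ℝ} (ht : t ≠ 0) :
    Ring.inverse (t • a) = t⁻¹ • Ring.inverse a := by
  have h1 : IsUnit (t • a) := by
    have := (Units.mk0 t ht).isUnit
    exact (ha.smul (Units.mk0 t ht))
  have h2 : (t • a) * (t⁻¹ • Ring.inverse a) = 1 := by
    rw [smul_mul_smul_comm, mul_inv_cancel₀ ht, Ring.mul_inverse_cancel _ ha, one_smul]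
  calc Ring.inverse (t • a) = Ring.inverse (t • a) * ((t • a) * (t⁻¹ • Ring.inverse a)) := by
        rw [h2, mul_one]
    _ = _ := by rw [← mul_assoc, Ring.inverse_mul_cancel _ h1, one_mul]

/-- The (inverse of the) denominator. -/
def auxG (Y v : A) : A := Y * Ring.inverse v * Y + v

lemma auxG_ge {Y v : A} (hY : IsSelfAdjoint Y) (hv : IsStrictlyPositive v) : v ≤ auxG Y v := by
  have := hY.conjugate_nonneg hv.ringInverse.nonneg
  exact le_add_of_nonneg_left this

lemma auxG_pos {Y v : A} (hY : IsSelfAdjoint Y) (hv : IsStrictlyPositive v) :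
    IsStrictlyPositive (auxG Y v) := hv.of_le (auxG_ge hY hv)

lemma auxF_le {Y v : A} (hY : IsSelfAdjoint Y) (hv : IsStrictlyPositive v) :
    Ring.inverse (auxG Y v) ≤ Ring.inverse v :=
  CStarAlgebra.ringInverse_le_ringInverse (auxG_ge hY hv) hv

lemma aux_smul_pos {v : A} (hv : IsStrictlyPositive v) {t : ℝ} (ht : 0 < t) :
    IsStrictlyPositive (t • v) :=
  ⟨smul_nonneg ht.le hv.nonneg, (hv.isUnit.smul (Units.mk0 t ht.ne'))⟩

lemma aux_thompson {Y v w : A} (hY : IsSelfAdjoint Y) (hv : IsStrictlyPositive v)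
    (hw : IsStrictlyPositive w) {t : ℝ} (ht : 0 < t) (h1 : v ≤ t • w) (h2 : w ≤ t • v) :
    Ring.inverse (auxG Y v) ≤ t • Ring.inverse (auxG Y w) := by
  have hi : 0 < t⁻¹ := inv_pos.mpr ht
  have e1 : t⁻¹ • Ring.inverse w ≤ Ring.inverse v := by
    rw [← aux_inv_smul hw.isUnit ht.ne']
    exact CStarAlgebra.ringInverse_le_ringInverse h1 hv
  have e2 : t⁻¹ • w ≤ v := by
    have := smul_le_smul_of_nonneg_left h2 hi.le
    rwa [smul_smul, inv_mul_cancel₀ ht.ne', one_smul] at this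
  have e3 : t⁻¹ • auxG Y w ≤ auxG Y v := by
    unfold auxG
    rw [smul_add]
    refine add_le_add ?_ e2
    have := hY.conjugate_nonneg (sub_nonneg.mpr e1)
    rw [mul_sub, sub_mul, sub_nonneg, mul_smul_comm, smul_mul_assoc] at this
    exact this
  have := CStarAlgebra.ringInverse_le_ringInverse e3 (aux_smul_pos (auxG_pos hY hw) hi)
  rwa [aux_inv_smul (auxG_pos hY hw).isUnit hi.ne', inv_inv] at this

lemma aux_step {q P P' : A} {t M : ℝ} (ht : 1 ≤ t) (hM : 0 ≤ M) (h : P ≤ t • P')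
    (hP : P' ≤ M • q) : q + P ≤ ((1 + t * M) / (1 + M)) • (q + P') := by
  have hM' : 0 < 1 + M := by linarith
  have h3 : ((t - 1) / (1 + M)) • P' ≤ ((t - 1) / (1 + M)) • (M • q) :=
    smul_le_smul_of_nonneg_left hP (div_nonneg (by linarith) hM'.le)
  have e : ((1 + t * M) / (1 + M)) • (q + P') =
      (q + t • P') + (((t - 1) / (1 + M)) • (M • q) - ((t - 1) / (1 + M)) • P') := by
    match_scalars <;> field_simp <;> ring
  rw [e]
  exact (add_le_add le_rfl h).trans (le_add_of_nonneg_right (sub_nonneg.mpr h3))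

lemma aux_exists_c {q : A} (hq : IsStrictlyPositive q) : ∃ c : ℝ, 0 < c ∧ c • (1 : A) ≤ q := by
  cases subsingleton_or_nontrivial A
  · exact ⟨1, one_pos, (Subsingleton.elim _ _).le⟩
  obtain ⟨r, hr, h⟩ := (CFC.exists_pos_algebraMap_le_iff (A := A) hq.isSelfAdjoint).2
    fun x hx ↦ hq.spectrum_pos hx
  exact ⟨r, hr, by rwa [Algebra.algebraMap_eq_smul_one] at h⟩

lemma aux_le_of_norm {a w : A} (ha : IsSelfAdjoint a) {c e : ℝ} (hc : 0 < c)
    (hw : c • (1 : A) ≤ w) (he : ‖a‖ ≤ e) : a ≤ (e / c) • w := by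
  have h0 : 0 ≤ e := (norm_nonneg a).trans he
  have h1 : a ≤ ‖a‖ • (1 : A) := by
    have := ha.le_algebraMap_norm_self
    rwa [Algebra.algebraMap_eq_smul_one] at this
  have h2 : ‖a‖ • (1 : A) ≤ e • (1 : A) := smul_le_smul_of_nonneg_right he zero_le_one
  have h3 := smul_le_smul_of_nonneg_left hw (div_nonneg h0 hc.le)
  rw [smul_smul, div_mul_cancel₀ _ hc.ne'] at h3
  exact h1.trans (h2.trans h3)

/-- From contraction to a bound for the Thompson distance. -/
lemma aux_inf {v w : A} {c : ℝ} (hc : 0 < c) (hv : c • (1 : A) ≤ v) (hw : c • (1 : A) ≤ w)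
    (hv0 : 0 ≤ v) (hw0 : 0 ≤ w) {M s : ℝ} (hM : 0 ≤ M) (hs : 1 ≤ s) (hsM : s * M < 1 + M)
    (H : ∀ t : ℝ, 1 ≤ t → v ≤ t • w → w ≤ t • v →
      v ≤ (s * ((1 + t * M) / (1 + M))) • w ∧ w ≤ (s * ((1 + t * M) / (1 + M))) • v) :
    ∃ t : ℝ, 1 ≤ t ∧ t ≤ s / (1 + M - s * M) ∧ v ≤ t • w ∧ w ≤ t • v := by
  set S : Set ℝ := {t : ℝ | 1 ≤ t ∧ v ≤ t • w ∧ w ≤ t • v} with hS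
  have hcl : IsClosed S := by
    refine (isClosed_le continuous_const continuous_id).inter
      ((isClosed_le continuous_const ?_).inter (isClosed_le continuous_const ?_)) <;> fun_prop
  have hne : S.Nonempty := by
    refine ⟨1 + ‖v‖ / c + ‖w‖ / c, ?_, ?_, ?_⟩
    · have := div_nonneg (norm_nonneg v) hc.le
      have := div_nonneg (norm_nonneg w) hc.le
      linarith
    · refine (aux_le_of_norm (IsSelfAdjoint.of_nonneg hv0) hc hw le_rfl).trans ?_
      refine smul_le_smul_of_nonneg_right ?_ hw0
      have := div_nonneg (norm_nonneg w) hc.le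
      linarith
    · refine (aux_le_of_norm (IsSelfAdjoint.of_nonneg hw0) hc hv le_rfl).trans ?_
      refine smul_le_smul_of_nonneg_right ?_ hv0
      have := div_nonneg (norm_nonneg v) hc.le
      linarith
  have hbd : BddBelow S := ⟨1, fun t ht => ht.1⟩
  obtain ⟨h1, h2, h3⟩ := hcl.csInf_mem hne hbd
  set t := sInf S with ht
  have hM' : 0 < 1 + M := by linarith
  have hmem : s * ((1 + t * M) / (1 + M)) ∈ S := by
    refine ⟨?_, H t h1 h2 h3⟩
    have : 1 ≤ (1 + t * M) / (1 + M) := by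
      rw [le_div_iff₀ hM']; nlinarith
    nlinarith
  have hle := csInf_le hbd hmem
  refine ⟨t, h1, ?_, h2, h3⟩
  rw [le_div_iff₀ (by linarith)]
  rw [← ht, ← mul_div_assoc, le_div_iff₀ hM'] at hle
  linarith

lemma aux_norm {v w : A} (hw0 : 0 ≤ w) {t : ℝ} (ht : 1 ≤ t) (hv0 : 0 ≤ v)
    (h1 : v ≤ t • w) (h2 : w ≤ t • v) : ‖v - w‖ ≤ (t - 1) * (t + 1) * ‖w‖ := by
  have a1 : 0 ≤ t • v - w := sub_nonneg.mpr h2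
  have a2 : t • v - w ≤ (t ^ 2 - 1) • w := by
    have := smul_le_smul_of_nonneg_left h1 (by linarith : 0 ≤ t)
    rw [smul_smul] at this
    rw [sub_smul, one_smul, pow_two]
    exact sub_le_sub_right this _
  have a3 := CStarAlgebra.norm_le_norm_of_nonneg_of_le a1 a2
  -- two sided bound
  have b1 : v - w ≤ ((t - 1) * (t + 1)) • w := by
    have : v - w ≤ t • v - w := by
      refine sub_le_sub_right ?_ _
      calc v = (1 : ℝ) • v := (one_smul _ _).symm
        _ ≤ t • v := smul_le_smul_of_nonneg_right ht hv0
    refine this.trans (a2.trans (le_of_eq ?_))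
    congr 1; ring
  have b2 : -(((t - 1) * (t + 1)) • w) ≤ v - w := by
    have : w - v ≤ (t - 1) • v := by
      rw [sub_smul, one_smul]; exact sub_le_sub_right h2 _
    have h5 : (t - 1) • v ≤ (t - 1) • (t • w) :=
      smul_le_smul_of_nonneg_left h1 (by linarith)
    have h6 : (t - 1) • (t • w) ≤ ((t - 1) * (t + 1)) • w := by
      rw [smul_smul]
      exact smul_le_smul_of_nonneg_right (by nlinarith) hw0
    have := this.trans (h5.trans h6)
    rw [neg_le, neg_sub]; exact this
  have hk : 0 ≤ (t - 1) * (t + 1) := by nlinarith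
  have hsa : IsSelfAdjoint (v - w) :=
    (IsSelfAdjoint.of_nonneg hv0).sub (IsSelfAdjoint.of_nonneg hw0)
  have hwle : w ≤ algebraMap ℝ A ‖w‖ := (IsSelfAdjoint.of_nonneg hw0).le_algebraMap_norm_self
  have hkw : ((t - 1) * (t + 1)) • w ≤ algebraMap ℝ A ((t - 1) * (t + 1) * ‖w‖) := by
    have := smul_le_smul_of_nonneg_left hwle hk
    rwa [Algebra.algebraMap_eq_smul_one, smul_smul, ← Algebra.algebraMap_eq_smul_one] at this
  nontriviality A
  have hK : 0 ≤ (t - 1) * (t + 1) * ‖w‖ := mul_nonneg hk (norm_nonneg _)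
  have c1 := b1.trans hkw
  have c2 : algebraMap ℝ A (-((t - 1) * (t + 1) * ‖w‖)) ≤ v - w := by
    rw [map_neg]; exact (neg_le_neg hkw).trans b2
  rw [le_algebraMap_iff_spectrum_le hsa] at c1
  rw [algebraMap_le_iff_le_spectrum hsa] at c2
  rcases CStarAlgebra.norm_or_neg_norm_mem_spectrum hsa with h | h
  · exact c1 _ h
  · linarith [c2 _ h]

lemma aux_sPos {v : A} : SPos v ↔ IsStrictlyPositive v :=
  ⟨fun h => ⟨h.2.1, h.2.2⟩, fun h => ⟨h.isSelfAdjoint, h.nonneg, h.isUnit⟩⟩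

end aux

/-- boundedness-and-continuity part of Proposition 3.1: the map
`u ↦ v_q(u)` sending a selfadjoint `u ∈ B` to the unique strictly positive solution of
`v = q + η(((X−u)v⁻¹(X−u)+v)⁻¹)` is norm-continuous on the selfadjoint part of `B`
and satisfies `‖v_q(u)‖ ≤ ‖q‖ + ‖η‖·‖q⁻¹‖`. -/
theorem vq_continuous_and_bounded
    {A B : Type*} [CStarAlgebra A] [PartialOrder A] [StarOrderedRing A]
    [CStarAlgebra B] [PartialOrder B] [StarOrderedRing B]
    (ι : B →⋆ₐ[ℂ] A) (hι : Function.Injective ι)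
    (X : A) (hX : IsSelfAdjoint X)
    (η : A →L[ℂ] B) (hη : ∀ a : A, 0 ≤ a → 0 ≤ η a)
    (q : B) (hq : SPos q)
    (vq : B → B)
    (hfix : ∀ u : B, IsSelfAdjoint u → SPos (vq u) ∧
      vq u = q + η (Ring.inverse
        ((X - ι u) * Ring.inverse (ι (vq u)) * (X - ι u) + ι (vq u))))
    (huniq : ∀ u : B, IsSelfAdjoint u → ∀ v : B, SPos v →
      v = q + η (Ring.inverse ((X - ι u) * Ring.inverse (ι v) * (X - ι u) + ι v)) →
      v = vq u) :
    ContinuousOn vq {u : B | IsSelfAdjoint u} ∧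
    ∀ u : B, IsSelfAdjoint u → ‖vq u‖ ≤ ‖q‖ + ‖η‖ * ‖Ring.inverse q‖ := by
  have hmono : ∀ a b : A, a ≤ b → η a ≤ η b := fun a b hab => by
    have := hη _ (sub_nonneg.mpr hab)
    rwa [map_sub, sub_nonneg] at this
  have hsmul : ∀ (t : ℝ) (a : A), η (t • a) = t • η a := fun t a => by
    have := η.map_smul (t : ℂ) a
    simpa using this
  have hιle : ∀ a b : B, a ≤ b → ι a ≤ ι b := fun a b hab => OrderHomClass.mono ι hab
  have hιsmul : ∀ (t : ℝ) (a : B), ι (t • a) = t • ι a := fun t a => by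
    have := map_smul ι (t : ℂ) a
    simpa using this
  have hιc : Continuous ι := map_continuous ι
  have hιpos : ∀ v : B, IsStrictlyPositive v → IsStrictlyPositive (ι v) := fun v hv =>
    ⟨by simpa using hιle 0 v hv.nonneg, hv.isUnit.map ι⟩
  have hιn : ∀ b : B, ‖ι b‖ ≤ ‖b‖ := fun b => NonUnitalStarAlgHom.norm_apply_le ι b
  have hιinv : ∀ v : B, IsUnit v → Ring.inverse (ι v) = ι (Ring.inverse v) := fun v hv => by
    have h1 : ι v * ι (Ring.inverse v) = 1 := by
      rw [← map_mul, Ring.mul_inverse_cancel _ hv, map_one]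
    calc Ring.inverse (ι v) = Ring.inverse (ι v) * (ι v * ι (Ring.inverse v)) := by
          rw [h1, mul_one]
      _ = _ := by rw [← mul_assoc, Ring.inverse_mul_cancel _ (hv.map ι), one_mul]
  have hqp : IsStrictlyPositive q := aux_sPos.1 hq
  have hY : ∀ u : B, IsSelfAdjoint u → IsSelfAdjoint (X - ι u) := fun u hu =>
    hX.sub (hu.map ι)
  -- the map P
  set P : B → B → B := fun u v => η (Ring.inverse (auxG (X - ι u) (ι v))) with hP
  have hP0 : ∀ u v : B, IsSelfAdjoint u → IsStrictlyPositive v → 0 ≤ P u v := fun u v hu hv =>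
    hη _ (auxG_pos (hY u hu) (hιpos v hv)).ringInverse.nonneg
  have hPn : ∀ u v : B, IsSelfAdjoint u → q ≤ v → ‖P u v‖ ≤ ‖η‖ * ‖Ring.inverse q‖ := by
    intro u v hu hv
    have hvp := hqp.of_le hv
    refine (η.le_opNorm _).trans (mul_le_mul_of_nonneg_left ?_ (norm_nonneg _))
    refine (CStarAlgebra.norm_le_norm_of_nonneg_of_le
      (auxG_pos (hY u hu) (hιpos v hvp)).ringInverse.nonneg
      (auxF_le (hY u hu) (hιpos v hvp))).trans ?_
    rw [hιinv v hvp.isUnit]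
    refine (hιn _).trans ?_
    exact CStarAlgebra.norm_le_norm_of_nonneg_of_le hvp.ringInverse.nonneg
      (CStarAlgebra.ringInverse_le_ringInverse hv hqp)
  have hpos : ∀ u, IsSelfAdjoint u → IsStrictlyPositive (vq u) := fun u hu =>
    aux_sPos.1 (hfix u hu).1
  have heq : ∀ u, IsSelfAdjoint u → vq u = q + P u (vq u) := fun u hu => (hfix u hu).2
  have hge : ∀ u, IsSelfAdjoint u → q ≤ vq u := fun u hu => by
    rw [heq u hu]
    exact le_add_of_nonneg_right (hP0 u _ hu (hpos u hu))
  have hbound : ∀ u : B, IsSelfAdjoint u → ‖vq u‖ ≤ ‖q‖ + ‖η‖ * ‖Ring.inverse q‖ := by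
    intro u hu
    have h := hPn u _ hu (hge u hu)
    calc ‖vq u‖ = ‖q + P u (vq u)‖ := congrArg _ (heq u hu)
      _ ≤ _ := (norm_add_le _ _).trans (by linarith)
  refine ⟨?_, hbound⟩
  obtain ⟨c, hc, hcq⟩ := aux_exists_c hqp
  set M : ℝ := ‖η‖ * ‖Ring.inverse q‖ / c with hMdef
  have hM : 0 ≤ M := by positivity
  have hPM : ∀ u v : B, IsSelfAdjoint u → q ≤ v → P u v ≤ M • q := fun u v hu hv =>
    aux_le_of_norm (IsSelfAdjoint.of_nonneg (hP0 u v hu (hqp.of_le hv))) hc hcq (hPn u v hu hv)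
  have hPt : ∀ (u v w : B) (t : ℝ), IsSelfAdjoint u → q ≤ v → q ≤ w → 1 ≤ t → v ≤ t • w →
      w ≤ t • v → P u v ≤ t • P u w := by
    intro u v w t hu hv hw ht h1 h2
    have := aux_thompson (hY u hu) (hιpos v (hqp.of_le hv)) (hιpos w (hqp.of_le hw))
      (by linarith : 0 < t) (by rw [← hιsmul]; exact hιle _ _ h1)
      (by rw [← hιsmul]; exact hιle _ _ h2)
    have := hmono _ _ this
    rwa [hsmul] at this
  intro u₀ hu₀
  have hu₀ : IsSelfAdjoint u₀ := hu₀
  set w := vq u₀ with hw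
  have hqw : q ≤ w := hge u₀ hu₀
  have hwp : IsStrictlyPositive w := hpos u₀ hu₀
  set e : B → ℝ := fun u => ‖(q + P u w) - w‖ with he
  set s : B → ℝ := fun u => 1 + e u / c with hs
  have hPc : ContinuousAt (fun u => P u w) u₀ := by
    refine η.continuous.continuousAt.comp ?_
    obtain ⟨g, hg⟩ := (auxG_pos (hY u₀ hu₀) (hιpos w hwp)).isUnit
    have h1 : ContinuousAt (Ring.inverse : A → A) (auxG (X - ι u₀) (ι w)) := by
      rw [← hg]; exact NormedRing.inverse_continuousAt g
    refine ContinuousAt.comp (f := fun u => auxG (X - ι u) (ι w)) h1 ?_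
    unfold auxG
    fun_prop
  have hsc : ContinuousAt s u₀ := by
    have : ContinuousAt e u₀ := ((continuousAt_const.add hPc).sub continuousAt_const).norm
    exact continuousAt_const.add (this.div_const c)
  have hs0 : s u₀ = 1 := by
    have : q + P u₀ w = w := (heq u₀ hu₀).symm
    simp only [hs, he, this, sub_self, norm_zero, zero_div, add_zero]
  have hsge : ∀ u, 1 ≤ s u := fun u => by
    have : 0 ≤ e u / c := div_nonneg (norm_nonneg _) hc.le
    simp only [hs]; linarith
  set T : B → ℝ := fun u => s u / (1 + M - s u * M) with hT
  have hTc : ContinuousAt T u₀ := by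
    refine hsc.div (continuousAt_const.sub (hsc.mul continuousAt_const)) ?_
    rw [hs0]; simp
  have hT0 : T u₀ = 1 := by simp [hT, hs0]
  have hev : ∀ᶠ u in 𝓝 u₀, s u * M < 1 + M := by
    have : ContinuousAt (fun u => s u * M) u₀ := hsc.mul continuousAt_const
    refine this.eventually_lt continuousAt_const ?_
    rw [hs0]; linarith
  have key : ∀ᶠ u in 𝓝[{u : B | IsSelfAdjoint u}] u₀,
      ‖vq u - w‖ ≤ (T u - 1) * (T u + 1) * ‖w‖ := by
    filter_upwards [nhdsWithin_le_nhds hev, self_mem_nhdsWithin] with u hsM hu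
    have hu : IsSelfAdjoint u := hu
    have hqv := hge u hu
    have hvp := hpos u hu
    have hhq : q ≤ q + P u w := le_add_of_nonneg_right (hP0 u w hu hwp)
    have hsa : IsSelfAdjoint (q + P u w - w) :=
      (IsSelfAdjoint.of_nonneg (hqp.of_le hhq).nonneg).sub hwp.isSelfAdjoint
    have k1 : q + P u w ≤ s u • w := by
      have := aux_le_of_norm hsa hc (hcq.trans hqw) le_rfl
      simp only [hs, add_smul, one_smul]
      rwa [sub_le_iff_le_add'] at this
    have k2 : w ≤ s u • (q + P u w) := by
      have := aux_le_of_norm hsa.neg hc (hcq.trans hhq) (norm_neg _).le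
      rw [neg_sub, sub_le_iff_le_add'] at this
      rw [show s u = 1 + e u / c from rfl, add_smul (1 : ℝ), one_smul]
      exact this
    obtain ⟨t, t1, t2, t3, t4⟩ := aux_inf (M := M) (s := s u) hc (hcq.trans hqv) (hcq.trans hqw)
      hvp.nonneg hwp.nonneg hM (hsge u) hsM (by
        intro t ht h1 h2
        set r := (1 + t * M) / (1 + M) with hr
        have hr0 : 0 ≤ r := div_nonneg (by nlinarith) (by linarith)
        have hs0' : 0 ≤ s u := zero_le_one.trans (hsge u)
        have m1 := aux_step ht hM (hPt u _ w t hu hqv hqw ht h1 h2) (hPM u w hu hqw)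
        have m2 := aux_step ht hM (hPt u w _ t hu hqw hqv ht h2 h1) (hPM u _ hu hqv)
        rw [← heq u hu] at m1 m2
        constructor
        · refine m1.trans ((smul_le_smul_of_nonneg_left k1 hr0).trans (le_of_eq ?_))
          rw [smul_smul, mul_comm]
        · refine k2.trans ((smul_le_smul_of_nonneg_left m2 hs0').trans (le_of_eq ?_))
          rw [smul_smul])
    refine (aux_norm hwp.nonneg t1 hvp.nonneg t3 t4).trans ?_
    have t2' : t ≤ T u := t2
    refine mul_le_mul_of_nonneg_right ?_ (norm_nonneg _)
    nlinarith
  have hlim : Tendsto (fun u => (T u - 1) * (T u + 1) * ‖w‖) (𝓝[{u : B | IsSelfAdjoint u}] u₀)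
      (𝓝 0) := by
    have : ContinuousAt (fun u => (T u - 1) * (T u + 1) * ‖w‖) u₀ :=
      ((hTc.sub continuousAt_const).mul (hTc.add continuousAt_const)).mul continuousAt_const
    have := this.tendsto
    simp only [hT0, sub_self, zero_mul] at this
    exact this.mono_left nhdsWithin_le_nhds
  exact tendsto_iff_norm_sub_tendsto_zero.2
    (squeeze_zero' (Eventually.of_forall fun _ => norm_nonneg _) key hlim)
end
end

section
/- Let A be a unital C*-algebra, B ⊆ A a unital C*-subalgebra, X a selfadjoint element of A, η : A → B a continuous 2-positive linear map, and q ∈ B strictly positive. For each selfadjoint u ∈ B let v_q(u) denote the unique strictly positive solution of v = q + η(((X−u)v⁻¹(X−u)+v)⁻¹). Then there exist an open subset U of B containing every selfadjoint element of B and an analytic map ṽ : U → B (analytic as a map between the complex Banach spaces B and B) such that ṽ(u) = v_q(u) for every selfadjoint u ∈ B. -/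
noncomputable section

open Filter Topology
open scoped ComplexOrder

section helpers

theorem aux_sqrt {A : Type*} [CStarAlgebra A] [PartialOrder A] [StarOrderedRing A]
    {v : A} (hv : SPos v) : ∃ s : Aˣ, IsSelfAdjoint (s : A) ∧ v = s * s := by
  obtain ⟨h1, h2, h3⟩ := hv
  have : IsStrictlyPositive v := by
    rw [IsStrictlyPositive.iff_of_unital]; exact ⟨h2, h3⟩
  obtain ⟨b, hb, hb1, hb2⟩ := (CStarAlgebra.isStrictlyPositive_iff_exists_isUnit_and_isSelfAdjoint_and_eq_mul_self).1 this
  obtain ⟨s, rfl⟩ := hb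
  exact ⟨s, hb1, hb2⟩

theorem aux_inv_sa {A : Type*} [CStarAlgebra A] (s : Aˣ) (hs : IsSelfAdjoint (s : A)) :
    star ((s⁻¹ : Aˣ) : A) = ((s⁻¹ : Aˣ) : A) := by
  have : star s = s := by ext; simpa using hs.star_eq
  rw [← Units.coe_star, star_inv, this]

theorem aux_unit {A : Type*} [CStarAlgebra A] (s : Aˣ) (hs : IsSelfAdjoint (s : A))
    (Y : A) (hY : IsSelfAdjoint Y) : IsUnit ((s : A) * s + Complex.I • Y) := by
  set t : A := ((s⁻¹ : Aˣ) : A) with ht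
  have hsa : IsSelfAdjoint (t * Y * t) := by
    have : star t = t := aux_inv_sa s hs
    rw [IsSelfAdjoint, star_mul, star_mul, this, hY.star_eq, mul_assoc]
  have h1 : IsUnit (algebraMap ℂ A Complex.I - t * Y * t) := by
    have : Complex.I ∉ spectrum ℂ (t * Y * t) := by
      intro h
      have := hsa.im_eq_zero_of_mem_spectrum h
      simp at this
    simpa [spectrum.mem_iff] using this
  have h2 : IsUnit (algebraMap ℂ A (-Complex.I)) := by
    apply IsUnit.map
    simp
  have h3 := ((s.isUnit.mul (h2.mul h1)).mul s.isUnit)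
  convert h3 using 1
  have e1 : (s : A) * t = 1 := by simp [ht]
  have e2 : t * (s : A) = 1 := by simp [ht]
  rw [mul_sub, ← map_mul]
  simp only [neg_mul, Complex.I_mul_I, neg_neg, map_one, Algebra.algebraMap_eq_smul_one, mul_sub, sub_mul, mul_one]
  have : (s : A) * (t * Y * t) * s = Y := by
    calc _ = (s * t) * Y * (t * s) := by noncomm_ring
      _ = Y := by rw [e1, e2]; simp
  simp only [smul_mul_assoc, mul_smul_comm, one_mul, this]
  simp

theorem aux_inverse {A : Type*} [CStarAlgebra A] (v P N : Aˣ) (Y : A)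
    (hP : (P : A) = v + Complex.I • Y) (hN : (N : A) = v - Complex.I • Y) :
    Ring.inverse (Y * Ring.inverse (v : A) * Y + v) =
      (2 : ℂ)⁻¹ • (((P⁻¹ : Aˣ) : A) + ((N⁻¹ : Aˣ) : A)) ∧
    ((P⁻¹ : Aˣ) : A) * v * ((N⁻¹ : Aˣ) : A) = (Ring.inverse (Y * Ring.inverse (v : A) * Y + v)) ∧
    ((N⁻¹ : Aˣ) : A) * v * ((P⁻¹ : Aˣ) : A) = (Ring.inverse (Y * Ring.inverse (v : A) * Y + v)) := by
  have e0 : ∀ Z : A, Complex.I • Complex.I • Z = -Z := fun Z => by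
    rw [smul_smul, Complex.I_mul_I, neg_one_smul]
  have h1 : Y * Ring.inverse (v : A) * Y + v = ((P * v⁻¹ * N : Aˣ) : A) := by
    simp only [Units.val_mul, hP, hN, Ring.inverse_unit, add_mul, mul_sub, smul_mul_assoc,
      mul_smul_comm, Units.mul_inv, one_mul, Units.inv_mul_cancel_right, smul_add, e0]
    abel
  have h2 : Y * Ring.inverse (v : A) * Y + v = ((N * v⁻¹ * P : Aˣ) : A) := by
    simp only [Units.val_mul, hP, hN, Ring.inverse_unit, sub_mul, mul_add, smul_mul_assoc,
      mul_smul_comm, Units.mul_inv, one_mul, Units.inv_mul_cancel_right, smul_sub, e0]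
    abel
  refine ⟨?_, ?_, ?_⟩
  · rw [h1, Ring.inverse_unit]
    have e : (v : A) = (2 : ℂ)⁻¹ • (P + N) := by
      rw [hP, hN, add_add_sub_cancel, ← two_smul ℂ (v : A), smul_smul]; simp
    simp only [mul_inv_rev, inv_inv, Units.val_mul]
    rw [e]
    simp [mul_add, add_mul, add_comm]
  · rw [h2, Ring.inverse_unit]; simp [mul_assoc]
  · rw [h1, Ring.inverse_unit]; simp [mul_assoc]

theorem aux_norm_lt {B : Type*} [CStarAlgebra B] [PartialOrder B] [StarOrderedRing B]
    (a : B) (ha : 0 ≤ a) (h : IsStrictlyPositive (1 - a)) : ‖a‖ < 1 := by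
  rcases subsingleton_or_nontrivial B with hB | hB
  · rw [Subsingleton.elim a 0]; simp
  obtain ⟨r, hr, hr2⟩ := (CFC.exists_pos_algebraMap_le_iff (a := 1 - a) h.isSelfAdjoint).2
    (fun x hx => (h.spectrum_pos hx))
  have : a ≤ algebraMap ℝ B (1 - r) := by
    rw [map_sub, map_one]; exact le_sub_comm.1 hr2
  have h0 : 0 ≤ 1 - r := by
    have := ha.trans this
    by_contra hneg
    have h4 : algebraMap ℝ B (1 - r) ≤ algebraMap ℝ B 0 := algebraMap_mono B (by linarith)
    have h5 := le_antisymm this (by simpa using h4)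
    have := (algebraMap ℝ B).injective (h5.symm.trans (map_zero _).symm)
    linarith
  have := (CStarAlgebra.norm_le_iff_le_algebraMap a h0 ha).2 this
  linarith

open scoped InnerProductSpace in
theorem aux_cs {B : Type*} [CStarAlgebra B] [PartialOrder B] [StarOrderedRing B]
    (w1 w2 w3 w4 : B) : ‖star w1 * w2 + star w3 * w4‖ ≤
      √‖star w1 * w1 + star w3 * w3‖ * √‖star w2 * w2 + star w4 * w4‖ := by
  let x : WithCStarModule B (B × B) := (WithCStarModule.equiv B (B × B)).symm (star w2, star w4)
  let y : WithCStarModule B (B × B) := (WithCStarModule.equiv B (B × B)).symm (star w1, star w3)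
  have := CStarModule.norm_inner_le (A := B) (WithCStarModule B (B × B)) (x := x) (y := y)
  rw [WithCStarModule.prod_norm, WithCStarModule.prod_norm, WithCStarModule.prod_inner] at this
  change ‖star w1 * star (star w2) + star w3 * star (star w4)‖ ≤
    √‖star w2 * star (star w2) + star w4 * star (star w4)‖ *
    √‖star w1 * star (star w1) + star w3 * star (star w3)‖ at this
  simp only [star_star] at this
  rwa [mul_comm (√_)] at this

theorem aux_ident {B : Type*} [CStarAlgebra B] (f g : B → B) (O : Set B) (hO : IsOpen O)
    (hc : Convex ℝ O) (hf : AnalyticOnNhd ℂ f O) (hg : AnalyticOnNhd ℂ g O)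
    (h : ∀ w ∈ O, IsSelfAdjoint w → f w = g w) (w : B) (hw : w ∈ O)
    (hw2 : (realPart w : B) ∈ O) : f w = g w := by
  let l : ℂ → B := fun z => (realPart w : B) + z • (imaginaryPart w : B)
  have hl : AnalyticOnNhd ℂ l Set.univ := by
    intro z _
    apply AnalyticAt.add analyticAt_const
    exact analyticAt_id.smul analyticAt_const
  have hlc : Continuous l := by fun_prop
  have hlI : l Complex.I = w := realPart_add_I_smul_imaginaryPart w
  have hSc : Convex ℝ (l ⁻¹' O) := by
    have := (hc.translate_preimage_right (realPart w : B)).is_linear_preimage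
      (f := fun z : ℂ => z • (imaginaryPart w : B))
      ⟨fun x y => add_smul _ _ _, fun c x => smul_assoc _ _ _⟩
    exact this
  have hS : IsOpen (l ⁻¹' O) := hO.preimage hlc
  have h0 : (0 : ℂ) ∈ l ⁻¹' O := by simpa [l] using hw2
  have hfr : ∃ᶠ z in 𝓝[≠] (0 : ℂ), (f ∘ l) z = (g ∘ l) z := by
    have ht : Tendsto (fun t : ℝ => (t : ℂ)) (𝓝[≠] 0) (𝓝[≠] (0 : ℂ)) := by
      apply tendsto_nhdsWithin_of_tendsto_nhds_of_eventually_within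
      · exact (Complex.continuous_ofReal.tendsto' 0 0 (by simp)).mono_left nhdsWithin_le_nhds
      · filter_upwards [self_mem_nhdsWithin] with t ht
        simpa using ht
    apply ht.frequently
    apply Eventually.frequently
    have : ∀ᶠ z in 𝓝[≠] (0 : ℂ), z ∈ l ⁻¹' O := nhdsWithin_le_nhds (hS.mem_nhds h0)
    filter_upwards [ht.eventually this] with t htt
    apply h _ htt
    apply IsSelfAdjoint.add (realPart w).2
    exact IsSelfAdjoint.smul (Complex.conj_ofReal t) (imaginaryPart w).2
  have := AnalyticOnNhd.eqOn_of_preconnected_of_frequently_eq (f := f ∘ l) (g := g ∘ l)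
    (hf.comp (hl.mono (Set.subset_univ _)) (fun z hz => hz))
    (hg.comp (hl.mono (Set.subset_univ _)) (fun z hz => hz)) hSc.isPreconnected h0 hfr
  have h2 := this (show Complex.I ∈ l ⁻¹' O by simpa [hlI] using hw)
  simpa [hlI] using h2

theorem aux_re_mem {B : Type*} [CStarAlgebra B] {u w : B} {r : ℝ} (hu : IsSelfAdjoint u)
    (hw : w ∈ Metric.ball u r) : (realPart w : B) ∈ Metric.ball u r := by
  rw [mem_ball_iff_norm] at hw ⊢
  have : (realPart w : B) - u = realPart (w - u) := by
    rw [map_sub, AddSubgroupClass.coe_sub, hu.coe_realPart]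
  rw [this]
  exact (realPart.norm_le _).trans_lt hw

theorem aux_glue {B : Type*} [CStarAlgebra B] (g : B → B)
    (h : ∀ u : B, IsSelfAdjoint u → ∃ r > 0, ∃ φ : B → B,
      AnalyticOnNhd ℂ φ (Metric.ball u r) ∧ ∀ w ∈ Metric.ball u r, IsSelfAdjoint w → φ w = g w) :
    ∃ U : Set B, IsOpen U ∧ {u : B | IsSelfAdjoint u} ⊆ U ∧
      ∃ vt : B → B, AnalyticOnNhd ℂ vt U ∧ ∀ u : B, IsSelfAdjoint u → vt u = g u := by
  classical
  choose r hr φ hφ hφg using h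
  let U : Set B := {w | ∃ u, ∃ hu : IsSelfAdjoint u, w ∈ Metric.ball u (r u hu)}
  let vt : B → B := fun w => if hw : w ∈ U then
    φ hw.choose hw.choose_spec.choose w else 0
  have key : ∀ u (hu : IsSelfAdjoint u), ∀ w ∈ Metric.ball u (r u hu), vt w = φ u hu w := by
    intro u hu w hw
    have hwU : w ∈ U := ⟨u, hu, hw⟩
    simp only [vt, dif_pos hwU]
    have h1 := hwU.choose_spec.choose
    have h2 := hwU.choose_spec.choose_spec
    apply aux_ident _ _ (Metric.ball hwU.choose (r _ h1) ∩ Metric.ball u (r u hu))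
      (Metric.isOpen_ball.inter Metric.isOpen_ball)
      ((convex_ball _ _).inter (convex_ball _ _))
      ((hφ _ _).mono Set.inter_subset_left) ((hφ _ _).mono Set.inter_subset_right)
    · intro w' hw' hs
      rw [hφg _ _ _ hw'.1 hs, hφg _ _ _ hw'.2 hs]
    · exact ⟨h2, hw⟩
    · exact ⟨aux_re_mem h1 h2, aux_re_mem hu hw⟩
  refine ⟨U, ?_, fun u hu => ⟨u, hu, Metric.mem_ball_self (hr u hu)⟩, vt, ?_, ?_⟩
  · rw [isOpen_iff_mem_nhds]
    rintro w ⟨u, hu, hw⟩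
    exact mem_of_superset (Metric.isOpen_ball.mem_nhds hw) (fun w' hw' => ⟨u, hu, hw'⟩)
  · rintro w ⟨u, hu, hw⟩
    apply (hφ u hu w hw).congr
    filter_upwards [Metric.isOpen_ball.mem_nhds hw] with w' hw'
    exact (key u hu w' hw').symm
  · intro u hu
    rw [key u hu u (Metric.mem_ball_self (hr u hu))]
    exact hφg u hu u (Metric.mem_ball_self (hr u hu)) hu

theorem aux_contr {A B : Type*} [CStarAlgebra A] [PartialOrder A] [StarOrderedRing A]
    [CStarAlgebra B] [PartialOrder B] [StarOrderedRing B]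
    (ι : B →⋆ₐ[ℂ] A) (η : A →L[ℂ] B)
    (hη2 : ∀ p : Matrix (Fin 2) (Fin 2) A, (∃ y, p = star y * y) →
      ∃ z : Matrix (Fin 2) (Fin 2) B, p.map ⇑η = star z * z)
    (s : Bˣ) (hs : IsSelfAdjoint (s : B)) (R : A) (c : B)
    (h1 : η (R * (ι s * ι s) * star R) = c) (h2 : η (star R * (ι s * ι s) * R) = c)
    (k : B) (hk : ‖k‖ ≤ 1) :
    ‖((s⁻¹ : Bˣ) : B) * η (R * ι (s * k * s) * R) * ((s⁻¹ : Bˣ) : B)‖ ≤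
      ‖((s⁻¹ : Bˣ) : B) * c * ((s⁻¹ : Bˣ) : B)‖ := by
  set t : B := ((s⁻¹ : Bˣ) : B) with ht
  have hts : star t = t := aux_inv_sa s hs
  set K := ι k with hK
  have hKn : ‖K‖ ≤ 1 := (NonUnitalStarAlgHom.norm_apply_le ι k).trans hk
  have hKK : 0 ≤ 1 - star K * K := by
    rw [sub_nonneg]
    have h := CStarAlgebra.star_mul_le_algebraMap_norm_sq (a := K)
    refine h.trans ?_
    have : algebraMap ℝ A (‖K‖ ^ 2) ≤ algebraMap ℝ A 1 :=
      algebraMap_mono A (pow_le_one₀ (norm_nonneg _) hKn)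
    simpa using this
  set d := CFC.sqrt (1 - star K * K) with hd
  have hdd : d * d = 1 - star K * K := CFC.sqrt_mul_sqrt_self _ hKK
  have hds : star d = d := (CFC.sqrt_nonneg _).isSelfAdjoint.star_eq
  have hS : star (ι s) = ι s := by rw [← map_star, hs.star_eq]
  set S := ι s with hSdef
  obtain ⟨z, hz⟩ := hη2 _ ⟨!![S * star R, K * S * R; 0, d * S * R], rfl⟩
  have e00 := congrFun (congrFun hz 0) 0
  have e01 := congrFun (congrFun hz 0) 1
  have e11 := congrFun (congrFun hz 1) 1
  simp [Matrix.mul_apply, Fin.sum_univ_two, Matrix.star_apply, hS, hds] at e00 e01 e11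
  have f00 : R * S * (S * star R) = R * (S * S) * star R := by noncomm_ring
  have f01 : R * S * (K * S * R) = R * ι (s * k * s) * R := by
    simp only [map_mul, ← hSdef, ← hK]; noncomm_ring
  have f11 : star R * (S * star K) * (K * S * R) + star R * (S * d) * (d * S * R)
      = star R * (S * S) * R := by
    have : star R * (S * star K) * (K * S * R) + star R * (S * d) * (d * S * R)
      = star R * (S * (star K * K + d * d) * S) * R := by noncomm_ring
    rw [this, hdd]; simp
  rw [f00, h1] at e00
  rw [f01] at e01
  rw [← map_add, f11, h2] at e11
  have := aux_cs (z 0 0 * t) (z 0 1 * t) (z 1 0 * t) (z 1 1 * t)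
  simp only [star_mul, hts] at this
  have g : ∀ x1 x2 x3 x4 : B, t * x1 * (x2 * t) + t * x3 * (x4 * t) = t * (x1 * x2 + x3 * x4) * t := by
    intros; noncomm_ring
  rw [g, g, g, ← e00, ← e01, ← e11, Real.mul_self_sqrt (norm_nonneg _)] at this
  exact this

theorem aux_invertible {A B : Type*} [CStarAlgebra A] [PartialOrder A] [StarOrderedRing A]
    [CStarAlgebra B] [PartialOrder B] [StarOrderedRing B]
    (ι : B →⋆ₐ[ℂ] A) (η : A →L[ℂ] B)
    (hη2 : ∀ p : Matrix (Fin 2) (Fin 2) A, (∃ y, p = star y * y) →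
      ∃ z : Matrix (Fin 2) (Fin 2) B, p.map ⇑η = star z * z)
    (s : Bˣ) (hs : IsSelfAdjoint (s : B)) (R : A) (c : B)
    (h1 : η (R * (ι s * ι s) * star R) = c) (h2 : η (star R * (ι s * ι s) * R) = c)
    (hc : ‖((s⁻¹ : Bˣ) : B) * c * ((s⁻¹ : Bˣ) : B)‖ < 1)
    (L : B →L[ℂ] B)
    (hL : ∀ h, L h = h + η ((2 : ℂ)⁻¹ • (R * ι h * R + star R * ι h * star R))) :
    L.IsInvertible := by
  set t : B := ((s⁻¹ : Bˣ) : B) with ht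
  have e1 : (s : B) * t = 1 := by simp [ht]
  have e2 : t * (s : B) = 1 := by simp [ht]
  let S : B →L[ℂ] B := ContinuousLinearMap.mulLeftRight ℂ B s s
  let S' : B →L[ℂ] B := ContinuousLinearMap.mulLeftRight ℂ B t t
  have hS : ∀ x, S x = s * x * s := fun x => rfl
  have hS' : ∀ x, S' x = t * x * t := fun x => rfl
  have hSS' : S * S' = 1 := by
    ext x
    change s * (t * x * t) * s = x
    calc _ = (s * t) * x * (t * s) := by noncomm_ring
      _ = x := by rw [e1, e2]; simp
  have hS'S : S' * S = 1 := by
    ext x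
    change t * (s * x * s) * t = x
    calc _ = (t * s) * x * (s * t) := by noncomm_ring
      _ = x := by rw [e1, e2]; simp
  have hM : ‖1 - S' * L * S‖ < 1 := by
    refine lt_of_le_of_lt ?_ hc
    apply ContinuousLinearMap.opNorm_le_of_unit_norm (norm_nonneg _)
    intro k hk
    have a1 := aux_contr ι η hη2 s hs R c h1 h2 k hk.le
    have a2 := aux_contr ι η hη2 s hs (star R) c (by simpa using h2) (by simpa using h1) k hk.le
    have : (1 - S' * L * S) k = -((2 : ℂ)⁻¹ • (t * η (R * ι (s * k * s) * R) * t +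
        t * η (star R * ι (s * k * s) * star R) * t)) := by
      change k - t * (L (s * k * s)) * t = _
      rw [hL]
      have : t * (s * k * s) * t = k := by
        calc _ = (t * s) * k * (s * t) := by noncomm_ring
          _ = k := by rw [e1, e2]; simp
      rw [mul_add, add_mul, this, map_smul, map_add]
      simp [mul_add, add_mul]
    rw [this, norm_neg, norm_smul]
    refine (mul_le_mul_of_nonneg_left (norm_add_le _ _) (norm_nonneg _)).trans ?_
    have h2n : ‖(2 : ℂ)⁻¹‖ = 2⁻¹ := by simp
    rw [← ht] at a1 a2
    rw [h2n]
    linarith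
  have hu : IsUnit (S' * L * S) := by
    have := (Units.oneSub (1 - S' * L * S) hM).isUnit
    simpa using this
  have hSu : IsUnit S := ⟨⟨S, S', hSS', hS'S⟩, rfl⟩
  have hSu' : IsUnit S' := ⟨⟨S', S, hS'S, hSS'⟩, rfl⟩
  have hLu : IsUnit L := by
    have : L = S * (S' * L * S) * S' := by
      calc L = (S * S') * L * (S * S') := by rw [hSS']; simp
        _ = _ := by noncomm_ring
    rw [this]
    exact (hSu.mul hu).mul hSu'
  obtain ⟨U, rfl⟩ := hLu
  exact ⟨ContinuousLinearEquiv.ofUnit U, rfl⟩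

theorem aux_star {A B : Type*} [CStarAlgebra A] [CStarAlgebra B] (η : A →L[ℂ] B)
    (hη2 : ∀ p : Matrix (Fin 2) (Fin 2) A, (∃ y, p = star y * y) →
      ∃ z : Matrix (Fin 2) (Fin 2) B, p.map ⇑η = star z * z) (a : A) :
    η (star a) = star (η a) := by
  obtain ⟨z, hz⟩ := hη2 _ ⟨!![1, a; 0, 0], rfl⟩
  have e01 := congrFun (congrFun hz 0) 1
  have e10 := congrFun (congrFun hz 1) 0
  simp [Matrix.mul_apply, Fin.sum_univ_two, Matrix.star_apply] at e01 e10
  rw [e01, e10]; simp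

theorem aux_pos_near {B : Type*} [CStarAlgebra B] [PartialOrder B] [StarOrderedRing B]
    {v : B} (hv : SPos v) : ∀ᶠ w in 𝓝 v, IsSelfAdjoint w → SPos w := by
  obtain ⟨h1, h2, h3⟩ := hv
  rcases subsingleton_or_nontrivial B with hB | hB
  · refine Eventually.of_forall fun w _ => ?_
    rw [Subsingleton.elim w v]; exact ⟨h1, h2, h3⟩
  have hsp : IsStrictlyPositive v := by
    rw [IsStrictlyPositive.iff_of_unital]; exact ⟨h2, h3⟩
  obtain ⟨r, hr, hr2⟩ := (CFC.exists_pos_algebraMap_le_iff (a := v) h1).2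
    (fun x hx => (hsp.spectrum_pos hx))
  filter_upwards [Metric.ball_mem_nhds v hr, Units.isOpen.mem_nhds h3] with w hw hwu hws
  refine ⟨hws, ?_, hwu⟩
  rw [mem_ball_iff_norm] at hw
  have a1 := (hws.sub h1).neg_algebraMap_norm_le_self
  have a2 : algebraMap ℝ B ‖w - v‖ ≤ algebraMap ℝ B r := algebraMap_mono B hw.le
  have := add_le_add a1 hr2
  rw [sub_add_cancel] at this
  refine le_trans ?_ this
  rw [neg_add_eq_sub, sub_nonneg]
  exact a2

theorem aux_local
    {A B : Type*} [CStarAlgebra A] [PartialOrder A] [StarOrderedRing A]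
    [CStarAlgebra B] [PartialOrder B] [StarOrderedRing B]
    (ι : B →⋆ₐ[ℂ] A)
    (X : A) (hX : IsSelfAdjoint X)
    (η : A →L[ℂ] B)
    (hη2 : ∀ p : Matrix (Fin 2) (Fin 2) A, (∃ y, p = star y * y) →
      ∃ z : Matrix (Fin 2) (Fin 2) B, p.map ⇑η = star z * z)
    (q : B) (hq : SPos q) (u v : B) (hu : IsSelfAdjoint u) (hv : SPos v)
    (hfix : v = q + η (Ring.inverse ((X - ι u) * Ring.inverse (ι v) * (X - ι u) + ι v))) :
    ∃ r > 0, ∃ φ : B → B,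
      AnalyticOnNhd ℂ φ (Metric.ball u r) ∧ ∀ w ∈ Metric.ball u r, IsSelfAdjoint w →
        SPos (φ w) ∧ φ w = q + η (Ring.inverse
          ((X - ι w) * Ring.inverse (ι (φ w)) * (X - ι w) + ι (φ w))) := by
  have hYsa : ∀ w : B, IsSelfAdjoint w → IsSelfAdjoint (X - ι w) := fun w hw =>
    hX.sub (hw.map ι)
  let J : B →L[ℂ] A := LinearMap.mkContinuous ι.toAlgHom.toLinearMap 1
    (fun x => by simpa using NonUnitalStarAlgHom.norm_apply_le ι x)
  have hJ : ∀ x, J x = ι x := fun x => rfl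
  -- the resolvents
  have hPN : ∀ w y : B, IsSelfAdjoint w → SPos y → ∃ V P N : Aˣ, (V : A) = ι y ∧
      (P : A) = V + Complex.I • (X - ι w) ∧ (N : A) = V - Complex.I • (X - ι w) := by
    intro w y hw hy
    obtain ⟨s, hs, rfl⟩ := aux_sqrt hy
    let σ : Aˣ := Units.map (ι : B →* A) s
    have hσ : (σ : A) = ι s := rfl
    have hσs : IsSelfAdjoint (σ : A) := hs.map ι
    obtain ⟨P, hP⟩ := aux_unit σ hσs _ (hYsa w hw)
    obtain ⟨N, hN⟩ := aux_unit σ hσs _ (hYsa w hw).neg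
    refine ⟨σ * σ, P, N, by simp [hσ], by simpa using hP, ?_⟩
    rw [hN]; simp [sub_eq_add_neg, smul_add, smul_neg]
  let G : B × B → A := fun p => (2 : ℂ)⁻¹ • (Ring.inverse (J p.2 + Complex.I • (X - J p.1)) +
    Ring.inverse (J p.2 - Complex.I • (X - J p.1)))
  have hG : ∀ w y : B, IsSelfAdjoint w → SPos y →
      G (w, y) = Ring.inverse ((X - ι w) * Ring.inverse (ι y) * (X - ι w) + ι y) := by
    intro w y hw hy
    obtain ⟨V, P, N, hV, hP, hN⟩ := hPN w y hw hy
    have := (aux_inverse V P N _ hP hN).1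
    rw [hV] at this hP hN
    rw [this]
    simp only [G, hJ, ← hP, ← hN, Ring.inverse_unit]
  let F : B × B → B := fun p => p.2 - q - η (G p)
  have hFstar : ∀ w y : B, IsSelfAdjoint w → F (w, star y) = star (F (w, y)) := by
    intro w y hw
    have hinv : ∀ a : A, Ring.inverse (star a) = star (Ring.inverse a) := fun a =>
      Ring.inverse_star a
    have : G (w, star y) = star (G (w, y)) := by
      simp only [G, hJ, star_smul, star_add, ← hinv, star_sub, map_star, hX.star_eq]
      rw [← map_star ι w, hw.star_eq]
      simp [sub_eq_add_neg, add_comm]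
    simp only [F, this, aux_star η hη2, star_sub, hq.1.star_eq]
  have hF0 : F (u, v) = 0 := by
    simp only [F, hG u v hu hv]
    rw [sub_sub, sub_eq_zero]; exact hfix
  obtain ⟨V, P, N, hV, hP, hN⟩ := hPN u v hu hv
  have hP' : J v + Complex.I • (X - J u) = P := by rw [hP, hV]; rfl
  have hN' : J v - Complex.I • (X - J u) = N := by rw [hN, hV]; rfl
  have hFc : ContDiffAt ℂ (⊤ : WithTop ℕ∞) F (u, v) := by
    have hinv1 : ContDiffAt ℂ (⊤ : WithTop ℕ∞)
        (fun p : B × B => Ring.inverse (J p.2 + Complex.I • (X - J p.1))) (u, v) := by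
      refine ContDiffAt.comp (u, v) (g := Ring.inverse)
        (f := fun p : B × B => J p.2 + Complex.I • (X - J p.1)) ?_ (by fun_prop)
      simp only [hP']
      exact contDiffAt_ringInverse ℂ P
    have hinv2 : ContDiffAt ℂ (⊤ : WithTop ℕ∞)
        (fun p : B × B => Ring.inverse (J p.2 - Complex.I • (X - J p.1))) (u, v) := by
      refine ContDiffAt.comp (u, v) (g := Ring.inverse)
        (f := fun p : B × B => J p.2 - Complex.I • (X - J p.1)) ?_ (by fun_prop)
      simp only [hN']
      exact contDiffAt_ringInverse ℂ N
    have : ContDiffAt ℂ (⊤ : WithTop ℕ∞) G (u, v) := (hinv1.add hinv2).const_smul _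
    exact (contDiffAt_snd.sub contDiffAt_const).sub (η.contDiff.contDiffAt.comp (u, v) this)
  have htop : (⊤ : WithTop ℕ∞) ≠ 0 := by simp
  have hstarN : star ((P⁻¹ : Aˣ) : A) = ((N⁻¹ : Aˣ) : A) := by
    have : star P = N := by
      ext
      rw [Units.coe_star, hP, hN, hV, star_add, star_smul, (hYsa u hu).star_eq, ← map_star,
        hv.1.star_eq]
      simp [sub_eq_add_neg, add_comm]
    rw [← Units.coe_star, star_inv, this]
  have hinvt : (fderiv ℂ F (u, v) ∘L .inr ℂ B B).IsInvertible := by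
    obtain ⟨s, hs, hvs⟩ := aux_sqrt hv
    obtain ⟨-, i1, i2⟩ := aux_inverse V P N _ hP hN
    rw [hV] at i1 i2
    have hιs : ι s * ι s = ι v := by rw [hvs, map_mul]
    apply aux_invertible ι η hη2 s hs ((P⁻¹ : Aˣ) : A) (v - q)
    · rw [hιs, hstarN, i1, sub_eq_iff_eq_add'.2 hfix]
    · rw [hιs, hstarN, i2, sub_eq_iff_eq_add'.2 hfix]
    · have hts := aux_inv_sa s hs
      set t : B := ((s⁻¹ : Bˣ) : B) with ht
      have e1 : (s : B) * t = 1 := by simp [ht]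
      have e2 : t * (s : B) = 1 := by simp [ht]
      have htvt : t * v * t = 1 := by
        rw [hvs, ← mul_assoc, e2, one_mul, e1]
      apply aux_norm_lt
      · have : v - q = η (((N⁻¹ : Aˣ) : A) * ι v * ((P⁻¹ : Aˣ) : A)) := by
          rw [i2, sub_eq_iff_eq_add'.2 hfix]
        -- positivity of `v - q` through 2-positivity
        obtain ⟨z, hz⟩ := hη2 _ ⟨!![ι s * ((P⁻¹ : Aˣ) : A), 0; 0, 0], rfl⟩
        have e00 := congrFun (congrFun hz 0) 0
        have hSs : star (ι s) = ι s := by rw [← map_star, hs.star_eq]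
        simp [Matrix.mul_apply, Fin.sum_univ_two, Matrix.star_apply, hSs, hstarN] at e00
        have e3 : ((N⁻¹ : Aˣ) : A) * ι s * (ι s * ((P⁻¹ : Aˣ) : A)) =
          ((N⁻¹ : Aˣ) : A) * ι v * ((P⁻¹ : Aˣ) : A) := by rw [← hιs]; noncomm_ring
        rw [e3, ← this] at e00
        rw [e00]
        have h0 : 0 ≤ star (z 0 0) * z 0 0 + star (z 1 0) * z 1 0 :=
          add_nonneg (star_mul_self_nonneg _) (star_mul_self_nonneg _)
        have := star_left_conjugate_nonneg h0 t
        rwa [hts] at this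
      · rw [mul_sub, sub_mul, htvt, sub_sub_cancel]
        obtain ⟨m, hm, hqm⟩ := aux_sqrt hq
        rw [CStarAlgebra.isStrictlyPositive_iff_eq_star_mul_self]
        refine ⟨m * t, m.isUnit.mul (s⁻¹).isUnit, ?_⟩
        rw [star_mul, hts, hm.star_eq, hqm]; noncomm_ring
    · intro h
      have hd : HasFDerivAt (fun y : B => F (u, y)) (fderiv ℂ F (u, v) ∘L .inr ℂ B B) v := by
        have := (hFc.differentiableAt htop).hasFDerivAt
        exact this.comp v (hasFDerivAt_prodMk_right u v)
      have hd1 : HasFDerivAt (fun y : B => Ring.inverse (J y + Complex.I • (X - J u)))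
          ((-ContinuousLinearMap.mulLeftRight ℂ A ((P⁻¹ : Aˣ) : A) ((P⁻¹ : Aˣ) : A)) ∘L J) v := by
        refine HasFDerivAt.comp (g := Ring.inverse)
          (f := fun y : B => J y + Complex.I • (X - J u)) v ?_ (J.hasFDerivAt.add_const _)
        rw [hP']
        exact hasFDerivAt_ringInverse P
      have hd2 : HasFDerivAt (fun y : B => Ring.inverse (J y - Complex.I • (X - J u)))
          ((-ContinuousLinearMap.mulLeftRight ℂ A ((N⁻¹ : Aˣ) : A) ((N⁻¹ : Aˣ) : A)) ∘L J) v := by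
        refine HasFDerivAt.comp (g := Ring.inverse)
          (f := fun y : B => J y - Complex.I • (X - J u)) v ?_ (J.hasFDerivAt.sub_const _)
        rw [hN']
        exact hasFDerivAt_ringInverse N
      have hd3 := ((hasFDerivAt_id (𝕜 := ℂ) v).sub_const q).sub
        (η.hasFDerivAt.comp v ((hd1.add hd2).const_smul (2 : ℂ)⁻¹))
      have := hd.unique hd3
      rw [this, hstarN]
      simp [hJ]
      abel
  let φ := hFc.implicitFunction htop hinvt
  have hφ0 : φ u = v := hFc.implicitFunction_apply_self htop hinvt
  have hφc : ContDiffAt ℂ (⊤ : WithTop ℕ∞) φ u := hFc.contDiffAt_implicitFunction htop hinvt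
  have hφe : ∀ᶠ x in 𝓝 u, F (x, φ x) = F (u, v) :=
    hFc.eventually_apply_implicitFunction htop hinvt
  have hφi : ∀ᶠ p in 𝓝 (u, v), F p = F (u, v) ↔ φ p.1 = p.2 :=
    hFc.eventually_apply_eq_iff_implicitFunction htop hinvt
  have hφan : ∀ᶠ x in 𝓝 u, AnalyticAt ℂ φ x := hφc.analyticAt.eventually_analyticAt
  have hφt : Tendsto φ (𝓝 u) (𝓝 v) := by
    have := hφc.continuousAt.tendsto
    rwa [hφ0] at this
  have hφs : ∀ᶠ x in 𝓝 u, F (x, star (φ x)) = F (u, v) ↔ φ x = star (φ x) := by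
    have h1 : Tendsto (fun x => (x, star (φ x))) (𝓝 u) (𝓝 (u, v)) := by
      have h2 := hφt.star
      rw [hv.1.star_eq] at h2
      exact tendsto_id.prodMk_nhds h2
    exact h1.eventually hφi
  obtain ⟨r, hr, hball⟩ := Metric.eventually_nhds_iff_ball.1
    (hφan.and (hφe.and (hφs.and (hφt.eventually (aux_pos_near hv)))))
  refine ⟨r, hr, φ, fun w hw => (hball w hw).1, fun w hw hws => ?_⟩
  obtain ⟨-, b1, b2, b3⟩ := hball w hw
  have hsa : IsSelfAdjoint (φ w) := by
    refine (b2.1 ?_).symm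
    rw [hFstar w _ hws, b1, hF0, star_zero]
  have hsp := b3 hsa
  refine ⟨hsp, ?_⟩
  rw [hF0] at b1
  simp only [F, hG w _ hws hsp] at b1
  rwa [sub_sub, sub_eq_zero] at b1

end helpers

/-- analyticity part of Proposition 3.1, with 2-positivity as in
Remark 3.2(1): if `η` is continuous and 2-positive (positivity of 2×2 matrices is
expressed via the algebraic characterization `p ≥ 0 ↔ ∃ y, p = y* y`, valid in any
C*-algebra, in particular in `M₂(A)` and `M₂(B)`), then the map `u ↦ v_q(u)` extends
to an analytic map on an open neighbourhood of the selfadjoint part of `B`. -/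
theorem vq_analytic
    {A B : Type*} [CStarAlgebra A] [PartialOrder A] [StarOrderedRing A]
    [CStarAlgebra B] [PartialOrder B] [StarOrderedRing B]
    (ι : B →⋆ₐ[ℂ] A) (hι : Function.Injective ι)
    (X : A) (hX : IsSelfAdjoint X)
    (η : A →L[ℂ] B)
    (hη2 : ∀ p : Matrix (Fin 2) (Fin 2) A, (∃ y, p = star y * y) →
      ∃ z : Matrix (Fin 2) (Fin 2) B, p.map ⇑η = star z * z)
    (q : B) (hq : SPos q)
    (vq : B → B)
    (hfix : ∀ u : B, IsSelfAdjoint u → SPos (vq u) ∧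
      vq u = q + η (Ring.inverse
        ((X - ι u) * Ring.inverse (ι (vq u)) * (X - ι u) + ι (vq u))))
    (huniq : ∀ u : B, IsSelfAdjoint u → ∀ v : B, SPos v →
      v = q + η (Ring.inverse ((X - ι u) * Ring.inverse (ι v) * (X - ι u) + ι v)) →
      v = vq u) :
    ∃ U : Set B, IsOpen U ∧ {u : B | IsSelfAdjoint u} ⊆ U ∧
      ∃ vt : B → B, AnalyticOnNhd ℂ vt U ∧ ∀ u : B, IsSelfAdjoint u → vt u = vq u := by
  apply aux_glue
  intro u hu
  obtain ⟨hv, hf⟩ := hfix u hu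
  obtain ⟨r, hr, φ, hφ, h⟩ := aux_local ι X hX η hη2 q hq u (vq u) hu hv hf
  exact ⟨r, hr, φ, hφ, fun w hw hws => huniq w hws _ (h w hw hws).1 (h w hw hws).2⟩
end
end

section
/- Let A be a unital C*-algebra, B ⊆ A a unital C*-subalgebra, X a selfadjoint element of A, a₀ a selfadjoint element of B, and η : A → B a continuous positive linear map. If b, w ∈ B have strictly positive imaginary parts and satisfy the subordination equation w = b + a₀ + η((X − w)⁻¹), then Im w = Im b + η(((X − Re w)(Im w)⁻¹(X − Re w) + Im w)⁻¹). Consequently, if w₁, w₂ ∈ B have strictly positive imaginary parts and satisfy the subordination equation at points b₁, b₂ ∈ B with strictly positive imaginary parts such that Im b₁ = Im b₂ and Re w₁ = Re w₂, then Im w₁ = Im w₂; that is, the set of pairs (Re w, Im w) arising from such solutions with fixed Im b = q is the graph of a function. -/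
noncomputable section

open Filter Topology
open scoped ComplexOrder

section helpers

variable {A B : Type*} [CStarAlgebra A] [PartialOrder A] [StarOrderedRing A]
    [CStarAlgebra B] [PartialOrder B] [StarOrderedRing B]

lemma aux_inverse_eq {R : Type*} [Ring R] {a b : R} (h1 : a * b = 1) (h2 : b * a = 1) :
    Ring.inverse a = b :=
  Ring.inverse_unit (⟨a, b, h1, h2⟩ : Rˣ)

lemma aux_inv_scale {a b : A} (ha : IsStrictlyPositive a) {t : ℝ} (ht : 0 < t)
    (hab : a ≤ t • b) : Ring.inverse b ≤ t • Ring.inverse a := by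
  have h1 : t⁻¹ • a ≤ b := by
    have := smul_le_smul_of_nonneg_left hab (inv_nonneg.2 ht.le)
    rwa [smul_smul, inv_mul_cancel₀ ht.ne', one_smul] at this
  have h2 : IsStrictlyPositive (t⁻¹ • a) := ha.smul (inv_pos.2 ht)
  have h3 : Ring.inverse (t⁻¹ • a) = t • Ring.inverse a := by
    apply aux_inverse_eq
    · rw [smul_mul_smul_comm, Ring.mul_inverse_cancel _ ha.isUnit, inv_mul_cancel₀ ht.ne', one_smul]
    · rw [smul_mul_smul_comm, Ring.inverse_mul_cancel _ ha.isUnit, mul_inv_cancel₀ ht.ne', one_smul]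
  rw [← h3]
  exact CStarAlgebra.ringInverse_le_ringInverse h1 h2

lemma aux_inv_nonneg {a : A} (ha : IsStrictlyPositive a) : 0 ≤ Ring.inverse a := by
  rw [Ring.inverse_of_isUnit ha.isUnit]
  exact CFC.inv_nonneg_of_nonneg _ (by simpa using ha.nonneg)

lemma aux_P_pos {Y v : A} (hY : IsSelfAdjoint Y) (hv : IsStrictlyPositive v) :
    IsStrictlyPositive (Y * Ring.inverse v * Y + v) :=
  IsStrictlyPositive.nonneg_add (hY.conjugate_nonneg (aux_inv_nonneg hv)) hv

lemma aux_P_scale {Y v w : A} (hY : IsSelfAdjoint Y) (hv : IsStrictlyPositive v)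
    (hw : IsStrictlyPositive w) {t : ℝ} (ht : 0 < t) (h1 : v ≤ t • w) (h2 : w ≤ t • v) :
    Ring.inverse (Y * Ring.inverse v * Y + v) ≤ t • Ring.inverse (Y * Ring.inverse w * Y + w) := by
  apply aux_inv_scale (aux_P_pos hY hw) ht
  rw [smul_add]
  refine add_le_add ?_ h2
  have := hY.conjugate_le_conjugate (aux_inv_scale hv ht h1)
  rwa [mul_smul_comm, smul_mul_assoc] at this

lemma aux_eta_mono (η : A →L[ℂ] B) (hη : ∀ a : A, 0 ≤ a → 0 ≤ η a) {x y : A} (h : x ≤ y) :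
    η x ≤ η y := by
  have := hη (y - x) (sub_nonneg.2 h)
  rwa [map_sub, sub_nonneg] at this

lemma aux_eta_sa (η : A →L[ℂ] B) (hη : ∀ a : A, 0 ≤ a → 0 ≤ η a) {x : A}
    (hx : IsSelfAdjoint x) : IsSelfAdjoint (η x) := by
  have h1 : 0 ≤ algebraMap ℝ A ‖x‖ - x := sub_nonneg.2 hx.le_algebraMap_norm_self
  have h2 : 0 ≤ algebraMap ℝ A ‖x‖ := algebraMap_nonneg A (norm_nonneg x)
  have : η x = η (algebraMap ℝ A ‖x‖) - η (algebraMap ℝ A ‖x‖ - x) := by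
    rw [map_sub]; abel
  rw [this]
  exact (IsSelfAdjoint.of_nonneg (hη _ h2)).sub (IsSelfAdjoint.of_nonneg (hη _ h1))

lemma aux_eta_star (η : A →L[ℂ] B) (hη : ∀ a : A, 0 ≤ a → 0 ≤ η a) (x : A) :
    star (η x) = η (star x) := by
  have h1 := aux_eta_sa η hη (realPart x).2
  have h2 := aux_eta_sa η hη (imaginaryPart x).2
  have hx := realPart_add_I_smul_imaginaryPart x
  conv_lhs => rw [← hx]
  conv_rhs => rw [← hx]
  simp only [map_add, map_smul, star_add, star_smul, h1.star_eq, h2.star_eq,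
    (realPart x).2.star_eq, (imaginaryPart x).2.star_eq]

lemma aux_im_resolvent {Y v : A} (hY : IsSelfAdjoint Y) (hv : IsStrictlyPositive v) :
    imP (Ring.inverse (Y - Complex.I • v)) = Ring.inverse (Y * Ring.inverse v * Y + v) := by
  set P := Y * Ring.inverse v * Y + v with hP
  have hPp : IsStrictlyPositive P := aux_P_pos hY hv
  have hvs : IsSelfAdjoint v := IsSelfAdjoint.of_nonneg hv.nonneg
  set V := Ring.inverse v with hV
  have e1 : v * V = 1 := Ring.mul_inverse_cancel _ hv.isUnit
  have e2 : V * v = 1 := Ring.inverse_mul_cancel _ hv.isUnit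
  have hVs : IsSelfAdjoint V := hvs.ringInverse
  set Q := Ring.inverse P with hQ
  have hQs : IsSelfAdjoint Q := (IsSelfAdjoint.of_nonneg hPp.nonneg).ringInverse
  have f1 : P * Q = 1 := Ring.mul_inverse_cancel _ hPp.isUnit
  have f2 : Q * P = 1 := Ring.inverse_mul_cancel _ hPp.isUnit
  have k1 : (Y - Complex.I • v) * V * (Y + Complex.I • v) = P := by
    simp only [sub_mul, mul_add, smul_mul_assoc, mul_smul_comm, e1, mul_assoc, e2, one_mul, mul_one,
      smul_smul, Complex.I_mul_I, smul_add, smul_sub, hP]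
    simp
    abel
  have k2 : (Y + Complex.I • v) * V * (Y - Complex.I • v) = P := by
    simp only [add_mul, mul_sub, smul_mul_assoc, mul_smul_comm, e1, mul_assoc, e2, one_mul, mul_one,
      smul_smul, Complex.I_mul_I, smul_add, smul_sub, hP]
    simp
    abel
  have r : (Y - Complex.I • v) * (V * (Y + Complex.I • v) * Q) = 1 := by
    rw [← f1, ← k1]; simp only [mul_assoc]
  have l : (Q * ((Y + Complex.I • v) * V)) * (Y - Complex.I • v) = 1 := by
    rw [mul_assoc, k2, f2]
  have hlr := left_inv_eq_right_inv l r
  have hG : Ring.inverse (Y - Complex.I • v) = Q * ((Y + Complex.I • v) * V) :=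
    aux_inverse_eq (by rw [hlr]; exact r) l
  have hGs : star (Q * ((Y + Complex.I • v) * V)) = Q * ((Y - Complex.I • v) * V) := by
    rw [hlr]
    simp only [star_mul, star_add, star_smul, hQs.star_eq, hVs.star_eq, hY.star_eq, hvs.star_eq]
    simp [sub_eq_add_neg]
  rw [imP, hG, hGs, ← mul_sub, ← sub_mul]
  have : Y + Complex.I • v - (Y - Complex.I • v) = (2 * Complex.I) • v := by
    rw [mul_smul, two_smul]; abel
  rw [this, smul_mul_assoc, e1, mul_smul_comm, smul_smul, inv_mul_cancel₀ (by simp), mul_one,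
    one_smul]

lemma aux_decomp (w : B) : w = reP w + Complex.I • imP w := by
  have h : Complex.I * (2 * Complex.I)⁻¹ = (2 : ℂ)⁻¹ := by
    field_simp
  rw [reP, imP, smul_smul, h, ← smul_add]
  have : w + star w + (w - star w) = (2 : ℂ) • w := by rw [two_smul]; abel
  rw [this, smul_smul, inv_mul_cancel₀ two_ne_zero, one_smul]

lemma aux_reP_sa (w : B) : IsSelfAdjoint (reP w) := by
  rw [IsSelfAdjoint, reP, star_smul, star_add, star_star, add_comm]
  simp

lemma aux_imP_add (x y : B) : imP (x + y) = imP x + imP y := by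
  rw [imP, imP, imP, ← smul_add, star_add]
  congr 1; abel

lemma aux_imP_sa {x : B} (h : IsSelfAdjoint x) : imP x = 0 := by
  rw [imP, h.star_eq, sub_self, smul_zero]

lemma aux_imP_eta (η : A →L[ℂ] B) (hη : ∀ a : A, 0 ≤ a → 0 ≤ η a) (x : A) :
    imP (η x) = η (imP x) := by
  rw [imP, imP, aux_eta_star η hη, map_smul, map_sub]

lemma aux_SPos {v : B} (h : SPos v) : IsStrictlyPositive v := h.2.2.isStrictlyPositive h.2.1

lemma aux_iota {v : B} (ι : B →⋆ₐ[ℂ] A) (h : IsStrictlyPositive v) :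
    IsStrictlyPositive (ι v) :=
  (h.isUnit.map ι).isStrictlyPositive (map_nonneg ι h.nonneg)

lemma aux_le_smul {a b : B} (ha : IsStrictlyPositive a) (hb : IsStrictlyPositive b) :
    ∃ t : ℝ, 1 ≤ t ∧ b ≤ t • a := by
  rcases subsingleton_or_nontrivial B with hB | hB
  · exact ⟨1, le_rfl, (Subsingleton.elim _ _).le⟩
  obtain ⟨r, hr, hra⟩ := (CFC.exists_pos_algebraMap_le_iff (A := B)
    (IsSelfAdjoint.of_nonneg ha.nonneg)).2 fun x hx => ha.spectrum_pos hx
  refine ⟨max 1 (‖b‖ / r), le_max_left _ _, ?_⟩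
  calc b ≤ algebraMap ℝ B ‖b‖ := (IsSelfAdjoint.of_nonneg hb.nonneg).le_algebraMap_norm_self
    _ = (‖b‖ / r) • algebraMap ℝ B r := by
      rw [Algebra.algebraMap_eq_smul_one, Algebra.algebraMap_eq_smul_one, smul_smul,
        div_mul_cancel₀ _ hr.ne']
    _ ≤ (‖b‖ / r) • a := smul_le_smul_of_nonneg_left hra (by positivity)
    _ ≤ _ := smul_le_smul_of_nonneg_right (le_max_right _ _) ha.nonneg

lemma aux_step_s3 (ι : B →⋆ₐ[ℂ] A) (η : A →L[ℂ] B) (hη : ∀ a : A, 0 ≤ a → 0 ≤ η a)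
    {Y : A} (hY : IsSelfAdjoint Y) {q v w : B}
    (hv : IsStrictlyPositive v) (hw : IsStrictlyPositive w)
    (ev : v = q + η (Ring.inverse (Y * Ring.inverse (ι v) * Y + ι v)))
    (ew : w = q + η (Ring.inverse (Y * Ring.inverse (ι w) * Y + ι w)))
    {e s : ℝ} (hs : 0 ≤ s) (hq : e • w ≤ q)
    (h1 : v ≤ (1 + s) • w) (h2 : w ≤ (1 + s) • v) :
    v ≤ (1 + (1 - e) * s) • w := by
  have hmono : ∀ {x y : B}, x ≤ (1 + s) • y → ι x ≤ (1 + s) • ι y := by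
    intro x y h
    have h3 := map_nonneg ι (sub_nonneg.2 h)
    rw [map_sub, sub_nonneg] at h3
    have h4 : ι ((1 + s) • y) = (1 + s) • ι y := by
      rw [← Complex.coe_smul, map_smul, Complex.coe_smul]
    rwa [h4] at h3
  have key := aux_eta_mono η hη (aux_P_scale hY (aux_iota ι hv) (aux_iota ι hw)
    (by linarith : 0 < 1 + s) (hmono h1) (hmono h2))
  set F := Ring.inverse (Y * Ring.inverse (ι w) * Y + ι w)
  have h5 : η ((1 + s) • F) = (1 + s) • η F := by
    rw [← Complex.coe_smul, map_smul, Complex.coe_smul]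
  have h6 : η F = w - q := by rw [eq_sub_iff_add_eq, add_comm]; exact ew.symm
  rw [h5, h6] at key
  have h7 := smul_le_smul_of_nonneg_left hq hs
  calc v ≤ q + (1 + s) • (w - q) := by
        conv_lhs => rw [ev]
        exact add_le_add le_rfl key
    _ = (1 + s) • w - s • q := by module
    _ ≤ (1 + s) • w - s • e • w := sub_le_sub_left h7 _
    _ = _ := by module

lemma aux_le_of_forall {v w : B} {c s : ℝ} (h0 : 0 ≤ c) (h1 : c < 1)
    (h : ∀ n : ℕ, v ≤ (1 + c ^ n * s) • w) : v ≤ w := by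
  have ht : Tendsto (fun n : ℕ => (1 + c ^ n * s) • w) atTop (𝓝 ((1 + 0 * s) • w)) :=
    (((tendsto_pow_atTop_nhds_zero_of_lt_one h0 h1).mul_const s).const_add 1).smul_const w
  rw [zero_mul, add_zero, one_smul] at ht
  exact ge_of_tendsto' ht h

lemma aux_unique (ι : B →⋆ₐ[ℂ] A) (η : A →L[ℂ] B) (hη : ∀ a : A, 0 ≤ a → 0 ≤ η a)
    {Y : A} (hY : IsSelfAdjoint Y) {q v w : B} (hq : IsStrictlyPositive q)
    (hv : IsStrictlyPositive v) (hw : IsStrictlyPositive w)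
    (ev : v = q + η (Ring.inverse (Y * Ring.inverse (ι v) * Y + ι v)))
    (ew : w = q + η (Ring.inverse (Y * Ring.inverse (ι w) * Y + ι w))) : v = w := by
  obtain ⟨t1, ht1, h1⟩ := aux_le_smul hw hv
  obtain ⟨t2, ht2, h2⟩ := aux_le_smul hv hw
  obtain ⟨t3, ht3, h3⟩ := aux_le_smul hq hv
  obtain ⟨t4, ht4, h4⟩ := aux_le_smul hq hw
  set t := max t3 t4
  have ht : 1 ≤ t := ht3.trans (le_max_left _ _)
  have hpos : 0 < t := by linarith
  have hsm : ∀ {x : B} {t' : ℝ}, t' ≤ t → x ≤ t' • q → t⁻¹ • x ≤ q := by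
    intro x t' h h'
    have := smul_le_smul_of_nonneg_left (h'.trans (smul_le_smul_of_nonneg_right h hq.nonneg))
      (inv_nonneg.2 hpos.le)
    rwa [smul_smul, inv_mul_cancel₀ hpos.ne', one_smul] at this
  have k3 := hsm (le_max_left _ _) h3
  have k4 := hsm (le_max_right _ _) h4
  have c0 : 0 ≤ 1 - t⁻¹ := sub_nonneg.2 (inv_le_one_of_one_le₀ ht)
  have c1 : 1 - t⁻¹ < 1 := by have := inv_pos.2 hpos; linarith
  set s := max t1 t2 - 1 with hs
  have hs0 : 0 ≤ s := by have := le_max_left t1 t2; linarith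
  have main : ∀ n : ℕ, v ≤ (1 + (1 - t⁻¹) ^ n * s) • w ∧ w ≤ (1 + (1 - t⁻¹) ^ n * s) • v := by
    intro n
    induction n with
    | zero =>
      have : 1 + (1 - t⁻¹) ^ 0 * s = max t1 t2 := by rw [hs]; ring
      rw [this]
      exact ⟨h1.trans (smul_le_smul_of_nonneg_right (le_max_left _ _) hw.nonneg),
        h2.trans (smul_le_smul_of_nonneg_right (le_max_right _ _) hv.nonneg)⟩
    | succ n ih =>
      have hn : 0 ≤ (1 - t⁻¹) ^ n * s := mul_nonneg (pow_nonneg c0 n) hs0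
      rw [pow_succ', mul_assoc]
      exact ⟨aux_step_s3 ι η hη hY hv hw ev ew hn k4 ih.1 ih.2,
        aux_step_s3 ι η hη hY hw hv ew ev hn k3 ih.2 ih.1⟩
  exact le_antisymm (aux_le_of_forall c0 c1 fun n => (main n).1)
    (aux_le_of_forall c0 c1 fun n => (main n).2)

end helpers

/-- taking imaginary parts in the subordination equation
`w = b + a₀ + η((X − w)⁻¹)` yields
`Im w = Im b + η(((X − Re w)(Im w)⁻¹(X − Re w) + Im w)⁻¹)`; consequently, solutions with
the same `Im b` and the same `Re w` have the same `Im w` (the graph property of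
`(Re ω, Im ω)` from Remark 3.2(2)). -/
theorem subordination_imaginary_part_graph
    {A B : Type*} [CStarAlgebra A] [PartialOrder A] [StarOrderedRing A]
    [CStarAlgebra B] [PartialOrder B] [StarOrderedRing B]
    (ι : B →⋆ₐ[ℂ] A) (hι : Function.Injective ι)
    (X : A) (hX : IsSelfAdjoint X)
    (a₀ : B) (ha₀ : IsSelfAdjoint a₀)
    (η : A →L[ℂ] B) (hη : ∀ a : A, 0 ≤ a → 0 ≤ η a) :
    (∀ b w : B, SPos (imP b) → SPos (imP w) →
      w = b + a₀ + η (Ring.inverse (X - ι w)) →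
      imP w = imP b + η (Ring.inverse
        ((X - ι (reP w)) * Ring.inverse (ι (imP w)) * (X - ι (reP w)) + ι (imP w)))) ∧
    (∀ b₁ b₂ w₁ w₂ : B,
      SPos (imP b₁) → SPos (imP b₂) → SPos (imP w₁) → SPos (imP w₂) →
      w₁ = b₁ + a₀ + η (Ring.inverse (X - ι w₁)) →
      w₂ = b₂ + a₀ + η (Ring.inverse (X - ι w₂)) →
      imP b₁ = imP b₂ → reP w₁ = reP w₂ → imP w₁ = imP w₂) := by
  have hsaY : ∀ w : B, IsSelfAdjoint (X - ι (reP w)) := fun w =>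
    hX.sub ((aux_reP_sa w).map ι)
  have part1 : ∀ b w : B, SPos (imP b) → SPos (imP w) →
      w = b + a₀ + η (Ring.inverse (X - ι w)) →
      imP w = imP b + η (Ring.inverse
        ((X - ι (reP w)) * Ring.inverse (ι (imP w)) * (X - ι (reP w)) + ι (imP w))) := by
    intro b w _ hw h
    have h1 : X - ι w = (X - ι (reP w)) - Complex.I • ι (imP w) := by
      conv_lhs => rw [aux_decomp w]
      rw [map_add, map_smul]; abel
    rw [← aux_im_resolvent (hsaY w) (aux_iota ι (aux_SPos hw)), ← h1, ← aux_imP_eta η hη]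
    conv_lhs => rw [h]
    rw [aux_imP_add, aux_imP_add, aux_imP_sa ha₀, add_zero]
  refine ⟨part1, ?_⟩
  intro b₁ b₂ w₁ w₂ hb₁ hb₂ hw₁ hw₂ e₁ e₂ hb hw
  have k₁ := part1 b₁ w₁ hb₁ hw₁ e₁
  have k₂ := part1 b₂ w₂ hb₂ hw₂ e₂
  rw [← hb, ← hw] at k₂
  exact aux_unique ι η hη (hsaY w₁) (aux_SPos hb₁) (aux_SPos hw₁) (aux_SPos hw₂) k₁ k₂
end
end

section
/- Let Y be a Banach space, let (Aₙ)ₙ be a decreasing sequence of norm-closed subsets of Y (A₁ ⊇ A₂ ⊇ A₃ ⊇ ⋯), and let K ⊆ Y be a norm-compact subset. Then ⋂ₙ (Aₙ + K) = (⋂ₙ Aₙ) + K, where S + K denotes the Minkowski sum {s + k : s ∈ S, k ∈ K}. -/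
noncomputable section

open Filter Topology
open scoped Pointwise
open scoped ComplexOrder

/-- in a Banach space, for a decreasing sequence of norm-closed sets `Aₙ`
and a norm-compact set `K`, the intersection of the Minkowski sums `Aₙ + K` equals the
Minkowski sum of the intersection with `K`. -/
theorem iInter_add_compact
    {Y : Type*} [NormedAddCommGroup Y] [NormedSpace ℝ Y] [CompleteSpace Y]
    (A : ℕ → Set Y) (hclosed : ∀ n, IsClosed (A n)) (hdec : ∀ n, A (n + 1) ⊆ A n)
    (K : Set Y) (hK : IsCompact K) :
    (⋂ n, A n + K) = (⋂ n, A n) + K := by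
  apply Set.Subset.antisymm
  · intro y hy
    rw [Set.mem_iInter] at hy
    have hcl : ∀ n, IsClosed ((fun k => y - k) ⁻¹' (A n)) := fun n =>
      (hclosed n).preimage (continuous_const.sub continuous_id)
    have hne := IsCompact.nonempty_iInter_of_sequence_nonempty_isCompact_isClosed
      (fun n => K ∩ (fun k => y - k) ⁻¹' (A n))
      (fun n x hx => ⟨hx.1, hdec n hx.2⟩)
      (fun n => by
        obtain ⟨a, ha, k, hk, rfl⟩ := Set.mem_add.1 (hy n)
        exact ⟨k, hk, by simpa using ha⟩)
      (hK.inter_right (hcl 0))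
      (fun n => hK.isClosed.inter (hcl n))
    obtain ⟨k, hk⟩ := hne
    rw [Set.mem_iInter] at hk
    exact Set.mem_add.2 ⟨y - k, Set.mem_iInter.2 fun n => (hk n).2, k, (hk 0).1,
      sub_add_cancel y k⟩
  · rintro y hy
    obtain ⟨a, ha, k, hk, rfl⟩ := Set.mem_add.1 hy
    exact Set.mem_iInter.2 fun n => Set.add_mem_add (Set.mem_iInter.1 ha n) hk
end
end

section
/- Let B be a unital C*-algebra, let (ωₙ) be a sequence in B such that each Im ωₙ is strictly positive, ‖Im ωₙ‖ → 0, and ωₙ converges in norm to a selfadjoint element ω₀ ∈ B, and let ℓ ∈ B be strictly positive with ‖Im ωₙ/‖Im ωₙ‖ − ℓ‖ → 0. Then for every w ∈ B such that Im w is strictly positive and ℓ − (w − ω₀)*(Im w)⁻¹(w − ω₀) is strictly positive, there exists N such that for all n ≥ N the element Im ωₙ/‖Im ωₙ‖ − (w − ωₙ)*(Im w)⁻¹(w − ωₙ) is strictly positive. -/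
noncomputable section

open Filter Topology
open scoped ComplexOrder

/-- Strict positivity is an open condition among selfadjoint elements. -/
theorem SPos.eventually_of_tendsto {B : Type*} [CStarAlgebra B] [PartialOrder B]
    [StarOrderedRing B] {x : ℕ → B} {a : B} (ha : SPos a) (hx : ∀ n, IsSelfAdjoint (x n))
    (hlim : Tendsto x atTop (𝓝 a)) : ∃ N : ℕ, ∀ n ≥ N, SPos (x n) := by
  obtain ⟨hsa, hnn, hu⟩ := ha
  rcases subsingleton_or_nontrivial B with hB | hB
  · exact ⟨0, fun n _ => by rw [Subsingleton.elim (x n) a]; exact ⟨hsa, hnn, hu⟩⟩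
  have hspec : ∀ t ∈ spectrum ℝ a, 0 < t := fun t ht =>
    lt_of_le_of_ne (spectrum_nonneg_of_nonneg hnn ht)
      (fun h => spectrum.zero_notMem ℝ hu (h ▸ ht))
  obtain ⟨r, hr, hra⟩ := (CFC.exists_pos_algebraMap_le_iff (a := a) hsa).2 hspec
  obtain ⟨N, hN⟩ := Metric.tendsto_atTop.1 hlim (r / 2) (by positivity)
  refine ⟨N, fun n hn => ?_⟩
  have hd : ‖x n - a‖ ≤ r / 2 := by rw [← dist_eq_norm]; exact (hN n hn).le
  have h1 := ((hx n).sub hsa).neg_algebraMap_norm_le_self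
  have h2 : algebraMap ℝ B ‖x n - a‖ ≤ algebraMap ℝ B (r / 2) := algebraMap_mono B hd
  have h3 : algebraMap ℝ B (r / 2) ≤ x n := by
    calc algebraMap ℝ B (r / 2) = algebraMap ℝ B r + -algebraMap ℝ B (r / 2) := by
          rw [← sub_eq_add_neg, ← map_sub]; congr 1; ring
      _ ≤ a + (x n - a) := add_le_add hra ((neg_le_neg h2).trans h1)
      _ = x n := by abel
  have hpos := (CFC.exists_pos_algebraMap_le_iff (a := x n) (hx n)).1 ⟨r / 2, by positivity, h3⟩
  refine ⟨hx n, ?_, ?_⟩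
  · refine le_trans ?_ h3
    have := algebraMap_mono B (show (0 : ℝ) ≤ r / 2 by positivity)
    simpa using this
  · exact spectrum.isUnit_of_zero_notMem ℝ (fun h => lt_irrefl _ (hpos 0 h))

/-- if `ωₙ` have strictly positive imaginary parts with `‖Im ωₙ‖ → 0`,
`ωₙ → ω₀` in norm with `ω₀` selfadjoint, and the normalized imaginary parts converge in
norm to a strictly positive `ℓ`, then every point `w` of the open horodisc
`H̊₁(ω₀, ℓ)` eventually lies in the open sets `B̊⁺₁(ωₙ, ‖Im ωₙ‖^{-1/2})`. -/
theorem open_horodisc_eventual_inclusion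
    {B : Type*} [CStarAlgebra B] [PartialOrder B] [StarOrderedRing B]
    (ωs : ℕ → B) (hIm : ∀ n, SPos (imP (ωs n)))
    (hnorm : Tendsto (fun n => ‖imP (ωs n)‖) atTop (𝓝 0))
    (ω₀ : B) (hω₀ : IsSelfAdjoint ω₀) (hconv : Tendsto ωs atTop (𝓝 ω₀))
    (ℓ : B) (hℓ : SPos ℓ)
    (hl : Tendsto (fun n => ‖imP (ωs n)‖⁻¹ • imP (ωs n)) atTop (𝓝 ℓ))
    (w : B) (hw : SPos (imP w))
    (hwin : SPos (ℓ - star (w - ω₀) * Ring.inverse (imP w) * (w - ω₀))) :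
    ∃ N : ℕ, ∀ n ≥ N,
      SPos (‖imP (ωs n)‖⁻¹ • imP (ωs n) -
        star (w - ωs n) * Ring.inverse (imP w) * (w - ωs n)) := by
  have hinv : IsSelfAdjoint (Ring.inverse (imP w)) := by
    rw [IsSelfAdjoint, ← Ring.inverse_star, hw.1.star_eq]
  refine SPos.eventually_of_tendsto hwin (fun n => ?_) ?_
  · exact ((IsSelfAdjoint.all _).smul (hIm n).1).sub (hinv.conjugate' _)
  · have h : Tendsto (fun n => w - ωs n) atTop (𝓝 (w - ω₀)) := tendsto_const_nhds.sub hconv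
    exact hl.sub ((h.star.mul tendsto_const_nhds).mul h)
end
end

section
/- Let B be a unital C*-algebra, let (ωₙ) be a sequence in B such that each Im ωₙ is strictly positive, ‖Im ωₙ‖ → 0, and ‖Re ωₙ − ω₀‖ → 0 for a selfadjoint element ω₀ ∈ B, and let ℓ ∈ B be selfadjoint such that φ(Im ωₙ)/‖Im ωₙ‖ → φ(ℓ) for every state φ on B. If x ∈ B has strictly positive imaginary part and for every n there exists k ≥ n with (x − ω_k)*(Im x)⁻¹(x − ω_k) ≤ Im ω_k/‖Im ω_k‖, then (Re x − ω₀)(Im x)⁻¹(Re x − ω₀) + Im x ≤ ℓ. -/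
noncomputable section

open Filter Topology
open scoped ComplexOrder

theorem nonneg_of_states {B : Type*} [CStarAlgebra B] [PartialOrder B] [StarOrderedRing B]
    (d : B) (hd : IsSelfAdjoint d)
    (h : ∀ φ : B →L[ℂ] ℂ, (∀ a : B, 0 ≤ a → 0 ≤ φ a) → φ 1 = 1 → 0 ≤ (φ d).re) : 0 ≤ d := by
  by_contra hneg
  have hconv : Convex ℝ {a : B | 0 ≤ a} := by
    intro a ha b hb s t hs ht _
    exact add_nonneg (smul_nonneg hs ha) (smul_nonneg ht hb)
  obtain ⟨f, u, hfu, hu⟩ := geometric_hahn_banach_point_closed (E := B) hconv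
    (CStarAlgebra.isClosed_nonneg) (x := d) hneg
  have hu0 : u < 0 := by simpa using hu 0 le_rfl
  have hpos : ∀ a : B, 0 ≤ a → 0 ≤ f a := by
    intro a ha
    by_contra! hlt
    have h1 := hu ((u / f a) • a) (smul_nonneg (div_nonneg_of_nonpos hu0.le hlt.le) ha)
    rw [map_smul, smul_eq_mul, div_mul_cancel₀ _ hlt.ne] at h1
    exact lt_irrefl _ h1
  have hf1 : 0 < f 1 := by
    have h1 := hpos _ (sub_nonneg.2 hd.neg_algebraMap_norm_le_self)
    rw [Algebra.algebraMap_eq_smul_one, map_sub, map_neg, map_smul, smul_eq_mul] at h1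
    by_contra! hle
    nlinarith [norm_nonneg d]
  let g : B →L[ℝ] ℝ := (f 1)⁻¹ • (2 : ℝ)⁻¹ • (f + f.comp (starL' ℝ : B ≃L[ℝ] B).toContinuousLinearMap)
  have hg : ∀ a, g a = (f 1)⁻¹ * (2⁻¹ * (f a + f (star a))) := fun a => rfl
  have hφ : ∀ a : B, IsSelfAdjoint a →
      (StrongDual.extendRCLike (𝕜 := ℂ) g) a = (((f 1)⁻¹ * f a : ℝ) : ℂ) := by
    intro a ha
    rw [StrongDual.extendRCLike_apply, hg, hg, star_smul, ha.star_eq]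
    have : f (star (RCLike.I : ℂ) • a) = - f ((RCLike.I : ℂ) • a) := by
      rw [← map_neg, ← neg_smul]; simp
    rw [this]
    have h2 : (2⁻¹ * (f a + f a)) = f a := by ring
    rw [h2]
    simp
  have := h (StrongDual.extendRCLike (𝕜 := ℂ) g) (fun a ha => by
      rw [hφ a (.of_nonneg ha)]
      exact_mod_cast mul_nonneg (inv_nonneg.2 hf1.le) (hpos a ha)) (by
      rw [hφ 1 (.one B), inv_mul_cancel₀ hf1.ne']; simp)
  rw [hφ d hd, Complex.ofReal_re] at this
  have h3 : f d < 0 := hfu.trans hu0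
  have := mul_neg_of_pos_of_neg (inv_pos.2 hf1) h3
  linarith

theorem re_add_im {B : Type*} [CStarAlgebra B] (b : B) : reP b + Complex.I • imP b = b := by
  have h : Complex.I * (2 * Complex.I)⁻¹ = 2⁻¹ := by
    field_simp
  rw [reP, imP, smul_smul, h, ← smul_add, add_add_sub_cancel, ← two_smul ℂ b, smul_smul]
  simp

theorem reP_sa {B : Type*} [CStarAlgebra B] (b : B) : IsSelfAdjoint (reP b) := by
  rw [IsSelfAdjoint, reP, star_smul, star_add, star_star, add_comm]
  simp

/-- limsup horodisc inclusion: if `ωₙ` have strictly positive imaginary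
parts with `‖Im ωₙ‖ → 0` and `Re ωₙ → ω₀` in norm, and the normalized imaginary parts
converge to a selfadjoint `ℓ` weakly (tested against all states of `B`), then any `x`
with strictly positive imaginary part which lies in infinitely many of the closed sets
`B⁺₁(ω_k, ‖Im ω_k‖^{-1/2})` belongs to the closed horodisc, i.e. satisfies
`(Re x − ω₀)(Im x)⁻¹(Re x − ω₀) + Im x ≤ ℓ`. -/
theorem closed_horodisc_limsup_inclusion
    {B : Type*} [CStarAlgebra B] [PartialOrder B] [StarOrderedRing B]
    (ωs : ℕ → B) (hIm : ∀ n, SPos (imP (ωs n)))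
    (hnorm : Tendsto (fun n => ‖imP (ωs n)‖) atTop (𝓝 0))
    (ω₀ : B) (hω₀ : IsSelfAdjoint ω₀)
    (hre : Tendsto (fun n => reP (ωs n)) atTop (𝓝 ω₀))
    (ℓ : B) (hℓ : IsSelfAdjoint ℓ)
    (hweak : ∀ φ : B →L[ℂ] ℂ, (∀ a : B, 0 ≤ a → 0 ≤ φ a) → φ 1 = 1 →
      Tendsto (fun n => φ (imP (ωs n)) / (‖imP (ωs n)‖ : ℂ)) atTop (𝓝 (φ ℓ)))
    (x : B) (hx : SPos (imP x))
    (hmem : ∀ n : ℕ, ∃ k ≥ n,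
      star (x - ωs k) * Ring.inverse (imP x) * (x - ωs k) ≤ ‖imP (ωs k)‖⁻¹ • imP (ωs k)) :
    (reP x - ω₀) * Ring.inverse (imP x) * (reP x - ω₀) + imP x ≤ ℓ := by
  obtain ⟨hysa, -, hyu⟩ := hx
  set y := imP x with hy
  set a := reP x - ω₀ with ha
  have hasa : IsSelfAdjoint a := (reP_sa x).sub hω₀
  have hisa : IsSelfAdjoint (Ring.inverse y) := by
    rw [IsSelfAdjoint, ← Ring.inverse_star, hysa.star_eq]
  have hlim : Tendsto ωs atTop (𝓝 ω₀) := by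
    have h1 : Tendsto (fun n => imP (ωs n)) atTop (𝓝 0) := tendsto_zero_iff_norm_tendsto_zero.2 hnorm
    have h2 := hre.add (h1.const_smul Complex.I)
    simpa [re_add_im] using h2
  have hxa : x - ω₀ = a + Complex.I • y := by
    rw [ha, hy, sub_add_eq_add_sub, re_add_im]
  have hL : star (x - ω₀) * Ring.inverse y * (x - ω₀) = a * Ring.inverse y * a + y := by
    have e1 := Ring.inverse_mul_cancel y hyu
    have e2 := Ring.mul_inverse_cancel y hyu
    have hs : star (Complex.I • y) = -(Complex.I • y) := by
      rw [star_smul, hysa.star_eq, ← neg_smul]; simp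
    rw [hxa, star_add, hasa.star_eq, hs]
    simp only [add_mul, mul_add, neg_mul, smul_mul_assoc, mul_smul_comm, e2, one_mul, mul_assoc, e1, smul_add,
      mul_one, smul_add, smul_neg, smul_smul, Complex.I_mul_I, neg_smul, one_smul]
    abel
  have hT : Tendsto (fun n => star (x - ωs n) * Ring.inverse y * (x - ωs n)) atTop
      (𝓝 (a * Ring.inverse y * a + y)) := by
    rw [← hL]
    have h1 : Tendsto (fun n => x - ωs n) atTop (𝓝 (x - ω₀)) := hlim.const_sub x
    exact (h1.star.mul_const _).mul h1
  rw [← sub_nonneg]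
  have hLsa : IsSelfAdjoint (a * Ring.inverse y * a + y) := by
    refine IsSelfAdjoint.add ?_ hysa
    have := hisa.conjugate a
    rwa [hasa.star_eq] at this
  refine nonneg_of_states _ (hℓ.sub hLsa) fun φ hφ hφ1 => ?_
  rw [map_sub, Complex.sub_re, sub_nonneg]
  have t1 := (Complex.continuous_re.tendsto _).comp ((φ.continuous.tendsto _).comp hT)
  have t2 := (Complex.continuous_re.tendsto _).comp (hweak φ hφ hφ1)
  refine le_of_tendsto_of_tendsto_of_frequently t1 t2 ?_
  rw [frequently_atTop]
  intro n
  obtain ⟨k, hk, hle⟩ := hmem n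
  refine ⟨k, hk, ?_⟩
  have h1 := (Complex.le_def.1 (hφ _ (sub_nonneg.2 hle))).1
  rw [map_sub, ← Complex.coe_smul, map_smul, Complex.sub_re, Complex.zero_re, sub_nonneg] at h1
  simp only [Function.comp]
  refine h1.trans (le_of_eq ?_)
  rw [smul_eq_mul, div_eq_inv_mul, Complex.ofReal_inv]
end
end

section
/- Let B be a unital C*-algebra, let v ∈ B be strictly positive, and let ε ∈ B be selfadjoint. Then v + ε v⁻¹ ε is strictly positive, v + iε is invertible, and (v + iε)⁻¹ = (v + ε v⁻¹ ε)⁻¹ − i (v + ε v⁻¹ ε)⁻¹ ε v⁻¹. -/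
noncomputable section

open Filter Topology
open scoped ComplexOrder

/-- for `v` strictly positive and `ε` selfadjoint, `v + εv⁻¹ε` is strictly
positive, `v + iε` is invertible, and
`(v + iε)⁻¹ = (v + εv⁻¹ε)⁻¹ − i (v + εv⁻¹ε)⁻¹ ε v⁻¹`. -/
theorem inverse_with_selfadjoint_imaginary_part
    {B : Type*} [CStarAlgebra B] [PartialOrder B] [StarOrderedRing B]
    (v ε : B) (hv : SPos v) (hε : IsSelfAdjoint ε) :
    SPos (v + ε * Ring.inverse v * ε) ∧
    IsUnit (v + Complex.I • ε) ∧
    Ring.inverse (v + Complex.I • ε) =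
      Ring.inverse (v + ε * Ring.inverse v * ε) -
        Complex.I • (Ring.inverse (v + ε * Ring.inverse v * ε) * ε * Ring.inverse v) := by
  obtain ⟨hsa, hpos, hu⟩ := hv
  obtain ⟨u, rfl⟩ := hu
  have hstar : star (Ring.inverse (u : B)) = Ring.inverse (u : B) := by
    rw [← Ring.inverse_star, hsa.star_eq]
  rw [Ring.inverse_unit] at *
  have hinv : (0 : B) ≤ (↑u⁻¹ : B) := by
    have h := star_left_conjugate_nonneg hpos (↑u⁻¹ : B)
    rw [hstar] at h
    simpa using h
  have hc : (0 : B) ≤ ε * ↑u⁻¹ * ε := by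
    have h := star_left_conjugate_nonneg hinv ε
    rwa [hε.star_eq] at h
  have hw0 : (0 : B) ≤ ↑u + ε * ↑u⁻¹ * ε := add_nonneg hpos hc
  have hwu : IsUnit ((u : B) + ε * ↑u⁻¹ * ε) :=
    CStarAlgebra.isUnit_of_le (u : B) (le_add_of_nonneg_right hc)
      (IsStrictlyPositive.iff_of_unital.mpr ⟨hpos, u.isUnit⟩)
  refine ⟨⟨IsSelfAdjoint.of_nonneg hw0, hw0, hwu⟩, ?_⟩
  obtain ⟨w, hw⟩ := hwu
  rw [← hw, Ring.inverse_unit]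
  have h1 : ((u : B) - Complex.I • ε) * ↑u⁻¹ * (u + Complex.I • ε) = w := by
    rw [hw]
    simp [sub_mul, mul_add, smul_sub, smul_smul]
    abel
  have h2 : ((u : B) + Complex.I • ε) * ↑u⁻¹ * (u - Complex.I • ε) = w := by
    rw [hw]
    simp [add_mul, mul_sub, smul_smul]
    abel
  have hl : (↑w⁻¹ * (((u : B) - Complex.I • ε) * ↑u⁻¹)) * (u + Complex.I • ε) = 1 := by
    rw [mul_assoc, h1, Units.inv_mul]
  have hr : ((u : B) + Complex.I • ε) * (↑u⁻¹ * (u - Complex.I • ε) * ↑w⁻¹) = 1 := by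
    rw [← mul_assoc, ← mul_assoc, h2, Units.mul_inv]
  have heq := left_inv_eq_right_inv hl hr
  let a : Bˣ := ⟨(u : B) + Complex.I • ε, ↑w⁻¹ * (((u : B) - Complex.I • ε) * ↑u⁻¹),
    by rw [heq]; exact hr, hl⟩
  refine ⟨a.isUnit, ?_⟩
  have h3 : Ring.inverse ((u : B) + Complex.I • ε)
      = ↑w⁻¹ * (((u : B) - Complex.I • ε) * ↑u⁻¹) := Ring.inverse_unit a
  rw [h3]
  simp [sub_mul, mul_sub, mul_assoc]
end
end
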